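/- arXiv:1706.09198 — 3 statements merged into one kernel-verified Lean document; each statement's English description precedes it below -/
import Mathlib

section
/- Let q ≥ 2 be an even integer and let (f_n) and (g_n) be sequences in L²(ℝ₊^q) with each g_n symmetric and sup_n ‖f_n‖ < ∞. If ⟨f_n, g_n⟩ → 0 and ‖g_n ⌢_{q/2} g_n − g_n‖ → 0 as n → ∞, then ⟨f_n ⌢_{q/2} g_n, g_n⟩ → 0 as n → ∞. -/
open MeasureTheory Filter Topology

noncomputable section

/-- The positive orthant `ℝ₊ⁿ` inside `ℝⁿ`. -/
def posOrthant (n : ℕ) : Set (Fin n → ℝ) := {x | ∀ i, 0 ≤ x i}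

/-- Lebesgue measure restricted to the positive orthant; the measure underlying `L²(ℝ₊ⁿ)`. -/
def μpos (n : ℕ) : MeasureTheory.Measure (Fin n → ℝ) :=
  MeasureTheory.volume.restrict (posOrthant n)

/-- Total extension of a finite tuple, giving the junk value `0` out of range. -/
def pad {k : ℕ} (t : Fin k → ℝ) (i : ℕ) : ℝ := if h : i < k then t ⟨i, h⟩ else 0

/-- The `L²` inner product `⟨f, g⟩ = ∫ f ⬝ conj g` over the positive orthant. -/
def L2inner (n : ℕ) (f g : (Fin n → ℝ) → ℂ) : ℂ :=
  ∫ x, f x * (starRingEnd ℂ) (g x) ∂(μpos n)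

/-- The `L²` norm over the positive orthant. -/
def L2norm (n : ℕ) (f : (Fin n → ℝ) → ℂ) : ℝ :=
  Real.sqrt (∫ x, ‖f x‖ ^ 2 ∂(μpos n))

/-- The adjoint `f*(t₁,…,tₙ) = conj (f (tₙ,…,t₁))`. -/
def adjF (n : ℕ) (f : (Fin n → ℝ) → ℂ) : (Fin n → ℝ) → ℂ :=
  fun t => (starRingEnd ℂ) (f fun i => t i.rev)

/-- `f` is symmetric when `f = f*` a.e. on the positive orthant. -/
def IsSymmFn (n : ℕ) (f : (Fin n → ℝ) → ℂ) : Prop :=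
  ∀ᵐ t ∂(μpos n), f t = adjF n f t

/-- Reindexing a multivariate function along an equality of dimensions. -/
def reindex {a b : ℕ} (h : a = b) (F : (Fin a → ℝ) → ℂ) : (Fin b → ℝ) → ℂ :=
  fun t => F fun j => t (Fin.cast h j)

/-- The integrand (in the `s`-variables) of the `p`-th arc contraction
`(f ⌢_p g)(t₁,…,t_{m+n-2p}) = ∫ f(t₁,…,t_{m-p},s_p,…,s₁) g(s₁,…,s_p,t_{m-p+1},…,t_{m+n-2p}) ds`. -/
def arcKer (m n p : ℕ) (f : (Fin m → ℝ) → ℂ) (g : (Fin n → ℝ) → ℂ)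
    (t : Fin (m + n - 2 * p) → ℝ) (s : Fin p → ℝ) : ℂ :=
  f (fun j => if (j : ℕ) < m - p then pad t j else pad s (m - 1 - (j : ℕ))) *
  g (fun j => if (j : ℕ) < p then pad s j else pad t (m + (j : ℕ) - 2 * p))

/-- The `p`-th arc contraction `f ⌢_p g`. -/
def arc (m n p : ℕ) (f : (Fin m → ℝ) → ℂ) (g : (Fin n → ℝ) → ℂ) :
    (Fin (m + n - 2 * p) → ℝ) → ℂ :=
  fun t => ∫ s in posOrthant p, arcKer m n p f g t s

/-- The integrand of the star contraction of index `(p, p-1)`: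
`(f ⋆_p^{p-1} g)(t₁,…,t_{m+n-2p+1})
  = ∫ f(t₁,…,t_{m-p},t_{m-p+1},s_{p-1},…,s₁) g(s₁,…,s_{p-1},t_{m-p+1},…,t_{m+n-2p+1}) ds`. -/
def starKer (m n p : ℕ) (f : (Fin m → ℝ) → ℂ) (g : (Fin n → ℝ) → ℂ)
    (t : Fin (m + n + 1 - 2 * p) → ℝ) (s : Fin (p - 1) → ℝ) : ℂ :=
  f (fun j => if (j : ℕ) < m - p + 1 then pad t j else pad s (m - 1 - (j : ℕ))) *
  g (fun j => if (j : ℕ) < p - 1 then pad s j else pad t (m + (j : ℕ) + 1 - 2 * p))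

/-- The star contraction `f ⋆_p^{p-1} g` of index `(p, p-1)`. -/
def starC (m n p : ℕ) (f : (Fin m → ℝ) → ℂ) (g : (Fin n → ℝ) → ℂ) :
    (Fin (m + n + 1 - 2 * p) → ℝ) → ℂ :=
  fun t => ∫ s in posOrthant (p - 1), starKer m n p f g t s

/-- The `q/2`-th arc contraction of two functions of `q` (even) variables,
expressed again as a function of `q` variables. -/
def contrHalf (q : ℕ) (f g : (Fin q → ℝ) → ℂ) : (Fin q → ℝ) → ℂ :=
  fun t => ∫ s in posOrthant (q / 2),
    (f fun j => if (j : ℕ) < q - q / 2 then pad t j else pad s (q - 1 - (j : ℕ))) *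
    (g fun j => if (j : ℕ) < q / 2 then pad s j else pad t (q + (j : ℕ) - 2 * (q / 2)))

/-- The full contraction `f ⌢_q g = ∫ f(t₁,…,t_q) g(t_q,…,t₁) dt` of two
functions of `q` variables. -/
def fullContr (q : ℕ) (f g : (Fin q → ℝ) → ℂ) : ℂ :=
  ∫ t in posOrthant q, f t * g fun i => t i.rev

/-- A `q`-dimensional square (cube): a product of `q` intervals of equal length. -/
def IsCube (q : ℕ) (S : Set (Fin q → ℝ)) : Prop :=
  ∃ (a : Fin q → ℝ) (c : ℝ), S = Set.univ.pi fun i => Set.Icc (a i) (a i + c)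

/-- One step of the left-bracketed iterated contraction, keeping track of the dimension. -/
def iterStep (q : ℕ) (acc : (d : ℕ) × ((Fin d → ℝ) → ℂ))
    (pr : ℕ × ((Fin q → ℝ) → ℂ)) : (d : ℕ) × ((Fin d → ℝ) → ℂ) :=
  ⟨acc.1 + q - 2 * pr.1, arc acc.1 q pr.1 acc.2 pr.2⟩

/-- The left-bracketed iterated contraction `(⋯((f₀ ⌢_{r₁} f₁) ⌢_{r₂} f₂)⋯) ⌢_{r_k} f_k`. -/
def iterArc (q : ℕ) (f0 : (Fin q → ℝ) → ℂ) (l : List (ℕ × ((Fin q → ℝ) → ℂ))) :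
    (d : ℕ) × ((Fin d → ℝ) → ℂ) :=
  l.foldl (iterStep q) ⟨q, f0⟩

/-- The value of a (`0`-dimensional, i.e. scalar) iterated contraction. -/
def scalarOf (x : (d : ℕ) × ((Fin d → ℝ) → ℂ)) : ℂ := x.2 fun _ => 0

section ArcHelpers

variable {X : Type*} [MeasurableSpace X] {ν : Measure X} [SigmaFinite ν]

theorem qmp_left : Measure.QuasiMeasurePreserving (fun z : (X × X) × X => (z.1.1, z.2))
    ((ν.prod ν).prod ν) (ν.prod ν) :=
  QuasiMeasurePreserving.prodMap (Measure.quasiMeasurePreserving_fst (μ := ν) (ν := ν))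
    (Measure.QuasiMeasurePreserving.id ν)

theorem qmp_right : Measure.QuasiMeasurePreserving (fun z : (X × X) × X => (z.2, z.1.2))
    ((ν.prod ν).prod ν) (ν.prod ν) :=
  (Measure.measurePreserving_swap (μ := ν) (ν := ν)).quasiMeasurePreserving.comp
    (QuasiMeasurePreserving.prodMap (Measure.quasiMeasurePreserving_snd (μ := ν) (ν := ν))
    (Measure.QuasiMeasurePreserving.id ν))

theorem contr_lint (u v : X × X → ENNReal) (hu : AEMeasurable u (ν.prod ν))
    (hv : AEMeasurable v (ν.prod ν)) :
    ∫⁻ z, (∫⁻ s, u (z.1, s) * v (s, z.2) ∂ν) ^ (2:ℝ) ∂(ν.prod ν) ≤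
      (∫⁻ z, u z ^ (2:ℝ) ∂(ν.prod ν)) * (∫⁻ z, v z ^ (2:ℝ) ∂(ν.prod ν)) := by
  have hvs : AEMeasurable (fun z : X × X => v z.swap) (ν.prod ν) :=
    hv.comp_quasiMeasurePreserving
      (Measure.measurePreserving_swap (μ := ν) (ν := ν)).quasiMeasurePreserving
  have hu1 : ∀ᵐ x ∂ν, AEMeasurable (fun s => u (x, s)) ν := by
    filter_upwards [hu.aestronglyMeasurable.prodMk_left] with x hx using hx.aemeasurable
  have hv1 : ∀ᵐ y ∂ν, AEMeasurable (fun s => v (s, y)) ν := by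
    filter_upwards [hvs.aestronglyMeasurable.prodMk_left] with x hx using hx.aemeasurable
  have hu2 := Measure.quasiMeasurePreserving_fst (μ := ν) (ν := ν) |>.ae hu1
  have hv2 := Measure.quasiMeasurePreserving_snd (μ := ν) (ν := ν) |>.ae hv1
  have hA : AEMeasurable (fun x => ∫⁻ s, u (x, s) ^ (2:ℝ) ∂ν) ν :=
    (hu.pow_const 2).lintegral_prod_right'
  have hB : AEMeasurable (fun y => ∫⁻ s, v (s, y) ^ (2:ℝ) ∂ν) ν :=
    (hvs.pow_const 2).lintegral_prod_right'
  calc _ ≤ ∫⁻ z : X × X, (∫⁻ s, u (z.1, s) ^ (2:ℝ) ∂ν) * (∫⁻ s, v (s, z.2) ^ (2:ℝ) ∂ν)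
        ∂(ν.prod ν) := by
        apply lintegral_mono_ae
        filter_upwards [hu2, hv2] with z h1 h2
        have := ENNReal.lintegral_mul_le_Lp_mul_Lq ν Real.HolderConjugate.two_two h1 h2
        calc _ ≤ _ := ENNReal.rpow_le_rpow this (by norm_num)
          _ = _ := by
            rw [ENNReal.mul_rpow_of_nonneg _ _ (by norm_num), ← ENNReal.rpow_mul,
              ← ENNReal.rpow_mul]
            norm_num
    _ = _ := by
        rw [lintegral_prod_mul hA hB, lintegral_prod _ (hu.pow_const 2),
          ← lintegral_prod_swap (μ := ν) (ν := ν) (fun z => v z ^ (2:ℝ)),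
          lintegral_prod _ (hvs.pow_const 2)]
        rfl

theorem lint_sq_lt_top {Y : Type*} [MeasurableSpace Y] {κ : Measure Y} {F : Y → ℂ}
    (hF : MemLp F 2 κ) : ∫⁻ z, ‖F z‖ₑ ^ (2:ℝ) ∂κ < ⊤ := by
  have := lintegral_rpow_enorm_lt_top_of_eLpNorm_lt_top (by norm_num) (by norm_num) hF.2
  simpa using this

theorem contr_aesm {F G : X × X → ℂ} (hF : AEStronglyMeasurable F (ν.prod ν))
    (hG : AEStronglyMeasurable G (ν.prod ν)) :
    AEStronglyMeasurable (fun z : (X × X) × X => F (z.1.1, z.2) * G (z.2, z.1.2))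
      ((ν.prod ν).prod ν) :=
  (hF.comp_quasiMeasurePreserving qmp_left).mul (hG.comp_quasiMeasurePreserving qmp_right)

theorem contr_memLp {F G : X × X → ℂ} (hF : MemLp F 2 (ν.prod ν)) (hG : MemLp G 2 (ν.prod ν)) :
    MemLp (fun z : X × X => ∫ s, F (z.1, s) * G (s, z.2) ∂ν) 2 (ν.prod ν) := by
  refine ⟨(contr_aesm hF.1 hG.1).integral_prod_right', ?_⟩
  refine (eLpNorm_lt_top_iff_lintegral_rpow_enorm_lt_top (by norm_num) (by norm_num)).2 ?_
  have h := contr_lint (ν := ν) (fun z => ‖F z‖ₑ) (fun z => ‖G z‖ₑ) hF.1.enorm hG.1.enorm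
  have h2 := h.trans_lt (ENNReal.mul_lt_top (lint_sq_lt_top hF) (lint_sq_lt_top hG))
  refine lt_of_le_of_lt ?_ h2
  simp only [ENNReal.toReal_ofNat]
  apply lintegral_mono
  intro z
  apply ENNReal.rpow_le_rpow _ (by norm_num)
  refine (enorm_integral_le_lintegral_enorm _).trans ?_
  simp [enorm_mul]

theorem triple_integrable {F G H : X × X → ℂ} (hF : MemLp F 2 (ν.prod ν))
    (hG : MemLp G 2 (ν.prod ν)) (hH : MemLp H 2 (ν.prod ν)) :
    Integrable (fun z : (X × X) × X => F (z.1.1, z.2) * G (z.2, z.1.2) * H z.1)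
      ((ν.prod ν).prod ν) := by
  have hm := contr_aesm hF.1 hG.1
  have hH' : AEStronglyMeasurable (fun z : (X × X) × X => H z.1) ((ν.prod ν).prod ν) :=
    hH.1.comp_quasiMeasurePreserving Measure.quasiMeasurePreserving_fst
  refine ⟨hm.mul hH', ?_⟩
  have h := contr_lint (ν := ν) (fun z => ‖F z‖ₑ) (fun z => ‖G z‖ₑ) hF.1.enorm hG.1.enorm
  have h2 := h.trans_lt (ENNReal.mul_lt_top (lint_sq_lt_top hF) (lint_sq_lt_top hG))
  unfold HasFiniteIntegral
  have hmm : AEMeasurable (fun z : (X × X) × X => ‖F (z.1.1, z.2) * G (z.2, z.1.2) * H z.1‖ₑ)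
      ((ν.prod ν).prod ν) := (hm.mul hH').enorm
  rw [lintegral_prod _ hmm]
  have hK : AEMeasurable (fun z : X × X => ∫⁻ s, ‖F (z.1, s)‖ₑ * ‖G (s, z.2)‖ₑ ∂ν)
      (ν.prod ν) := by
    have := hm.enorm.lintegral_prod_right'
    simpa [enorm_mul] using this
  calc _ = ∫⁻ z, ((fun z : X × X => ∫⁻ s, ‖F (z.1, s)‖ₑ * ‖G (s, z.2)‖ₑ ∂ν) *
          (fun z => ‖H z‖ₑ)) z ∂(ν.prod ν) := by
        apply lintegral_congr
        intro z
        simp only [enorm_mul, Pi.mul_apply]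
        rw [lintegral_mul_const']
        exact enorm_ne_top
    _ ≤ _ := ENNReal.lintegral_mul_le_Lp_mul_Lq _ Real.HolderConjugate.two_two hK hH.1.enorm
    _ < ⊤ := ENNReal.mul_lt_top (ENNReal.rpow_lt_top_of_nonneg (by norm_num) h2.ne)
        (ENNReal.rpow_lt_top_of_nonneg (by norm_num) (lint_sq_lt_top hH).ne)

theorem triple_swap {F G H : X × X → ℂ} (hF : MemLp F 2 (ν.prod ν))
    (hG : MemLp G 2 (ν.prod ν)) (hH : MemLp H 2 (ν.prod ν)) :
    ∫ z, (∫ s, F (z.1, s) * G (s, z.2) ∂ν) * H z ∂(ν.prod ν) =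
      ∫ z, F z * (∫ y, G (z.2, y) * H (z.1, y) ∂ν) ∂(ν.prod ν) := by
  have hI := triple_integrable hF hG hH
  let T : (X × X) × X ≃ᵐ (X × X) × X :=
    MeasurableEquiv.prodAssoc.trans
      (((MeasurableEquiv.refl X).prodCongr MeasurableEquiv.prodComm).trans
        MeasurableEquiv.prodAssoc.symm)
  have hT : MeasurePreserving T ((ν.prod ν).prod ν) ((ν.prod ν).prod ν) :=
    (((measurePreserving_prodAssoc ν ν ν).symm _).comp
      ((MeasurePreserving.id ν).prod (Measure.measurePreserving_swap (μ := ν) (ν := ν)))).comp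
      (measurePreserving_prodAssoc ν ν ν)
  have hI2 := (hT.integrable_comp_emb T.measurableEmbedding).2 hI
  have e1 := hT.integral_comp' (fun z : (X × X) × X => F (z.1.1, z.2) * G (z.2, z.1.2) * H z.1)
  rw [integral_prod _ hI] at e1
  have e2 := integral_prod _ hI2
  simp only [Function.comp_def] at e2
  rw [e1] at e2
  calc _ = _ := by
        apply integral_congr_ae
        refine Eventually.of_forall fun z => ?_
        exact (integral_mul_const _ _).symm
    _ = _ := e2
    _ = _ := by
        apply integral_congr_ae
        refine Eventually.of_forall fun z => ?_
        show ∫ y, F (z.1, z.2) * G (z.2, y) * H (z.1, y) ∂ν = _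
        simp only [mul_assoc]
        exact integral_const_mul _ _

theorem cs_le {Y : Type*} [MeasurableSpace Y] {κ : Measure Y} {F D : Y → ℂ}
    (hF : MemLp F 2 κ) (hD : MemLp D 2 κ) :
    ‖∫ z, F z * D z ∂κ‖ ≤ Real.sqrt (∫ z, ‖F z‖ ^ 2 ∂κ) * Real.sqrt (∫ z, ‖D z‖ ^ 2 ∂κ) := by
  refine (norm_integral_le_integral_norm _).trans ?_
  have := integral_mul_norm_le_Lp_mul_Lq (μ := κ) (f := F) (g := D) Real.HolderConjugate.two_two
    (by simpa using hF) (by simpa using hD)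
  simpa [Real.sqrt_eq_rpow] using this

theorem abstract_bound (r : X ≃ᵐ X) (hr : MeasurePreserving r ν ν) (hrr : ∀ x, r (r x) = x)
    {F G : X × X → ℂ} (hF : MemLp F 2 (ν.prod ν)) (hG : MemLp G 2 (ν.prod ν))
    (hs : ∀ᵐ z ∂(ν.prod ν), G z = (starRingEnd ℂ) (G (r z.2, r z.1))) :
    ‖∫ z, (∫ s, F (z.1, r s) * G (s, z.2) ∂ν) * (starRingEnd ℂ) (G z) ∂(ν.prod ν)‖ ≤
      ‖∫ z, F z * (starRingEnd ℂ) (G z) ∂(ν.prod ν)‖ +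
      Real.sqrt (∫ z, ‖F z‖ ^ 2 ∂(ν.prod ν)) *
      Real.sqrt (∫ z : X × X, ‖(∫ s, G (z.1, r s) * G (s, z.2) ∂ν) - G z‖ ^ 2 ∂(ν.prod ν)) := by
  let R : X × X ≃ᵐ X × X := (MeasurableEquiv.refl X).prodCongr r
  have hR : MeasurePreserving R (ν.prod ν) (ν.prod ν) := (MeasurePreserving.id ν).prod hr
  let S : X × X ≃ᵐ X × X := (r.prodCongr r).trans MeasurableEquiv.prodComm
  have hS : MeasurePreserving S (ν.prod ν) (ν.prod ν) :=
    (Measure.measurePreserving_swap (μ := ν) (ν := ν)).comp (hr.prod hr)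
  have hF' : MemLp (fun z : X × X => F (z.1, r z.2)) 2 (ν.prod ν) := hF.comp_measurePreserving hR
  have hG' : MemLp (fun z : X × X => G (z.1, r z.2)) 2 (ν.prod ν) := hG.comp_measurePreserving hR
  have hGc : MemLp (fun z : X × X => (starRingEnd ℂ) (G z)) 2 (ν.prod ν) := hG.star
  let K : X × X → ℂ := fun z => ∫ s, G (z.1, r s) * G (s, z.2) ∂ν
  have hK : MemLp K 2 (ν.prod ν) := contr_memLp hG' hG
  have hD : MemLp (fun z => K z - G z) 2 (ν.prod ν) := hK.sub hG
  have hDS : MemLp (fun z => K (S z) - G (S z)) 2 (ν.prod ν) := hD.comp_measurePreserving hS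
  have hsc : ∀ᵐ z ∂(ν.prod ν), (starRingEnd ℂ) (G z) = G (S z) := by
    filter_upwards [hs] with z hz
    rw [hz, Complex.conj_conj]; rfl
  have e1 := triple_swap hF' hG hGc
  have e2 : ∫ z : X × X, F (z.1, r z.2) * (∫ y, G (z.2, y) * (starRingEnd ℂ) (G (z.1, y)) ∂ν)
      ∂(ν.prod ν) = ∫ z, F z * K (S z) ∂(ν.prod ν) := by
    rw [← hR.integral_comp' (fun z => F z * K (S z))]
    apply integral_congr_ae
    have h3 := Measure.quasiMeasurePreserving_fst (μ := ν) (ν := ν) |>.ae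
      (Measure.ae_ae_of_ae_prod hsc)
    filter_upwards [h3] with z hz
    show F (z.1, r z.2) * _ = F (z.1, r z.2) * K (r (r z.2), r z.1)
    rw [hrr]
    congr 1
    show _ = ∫ s, G (z.2, r s) * G (s, r z.1) ∂ν
    rw [← hr.integral_comp' (fun s => G (z.2, r s) * G (s, r z.1))]
    apply integral_congr_ae
    filter_upwards [hz] with y hy
    simp only [hrr, hy]
    rfl
  have e3 : ∫ z, F z * (starRingEnd ℂ) (G z) ∂(ν.prod ν) = ∫ z, F z * G (S z) ∂(ν.prod ν) := by
    apply integral_congr_ae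
    filter_upwards [hsc] with z hz
    rw [hz]
  have hGS : MemLp (fun z => G (S z)) 2 (ν.prod ν) := hG.comp_measurePreserving hS
  have e4 : ∫ z, F z * K (S z) ∂(ν.prod ν) = ∫ z, F z * G (S z) ∂(ν.prod ν) +
      ∫ z, F z * (K (S z) - G (S z)) ∂(ν.prod ν) := by
    refine Eq.trans ?_ (integral_add (hF.integrable_mul hGS) (hF.integrable_mul hDS))
    congr 1; ext z; show _ = F z * G (S z) + F z * (K (S z) - G (S z)); ring
  have e5 := hS.integral_comp' (fun z => ‖K z - G z‖ ^ 2)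
  have e6 := cs_le hF hDS
  rw [e5] at e6
  have e7 : ∫ z : X × X, (∫ s, F (z.1, r s) * G (s, z.2) ∂ν) * (starRingEnd ℂ) (G z) ∂(ν.prod ν)
      = ∫ z, F z * K (S z) ∂(ν.prod ν) := e1.trans e2
  rw [e7, e4, e3]
  exact (norm_add_le _ _).trans (add_le_add le_rfl e6)

end ArcHelpers

theorem μpos_eq_pi (n : ℕ) :
    μpos n = Measure.pi (fun _ : Fin n => (volume : Measure ℝ).restrict (Set.Ici 0)) := by
  rw [← Measure.restrict_pi_pi]
  unfold μpos
  congr 1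
  ext x
  simp only [posOrthant, Set.mem_pi, Set.mem_ofPred_eq, Set.mem_univ, true_imp_iff, Set.mem_Ici]

instance μpos_sigmaFinite (n : ℕ) : SigmaFinite (μpos n) := by
  rw [μpos_eq_pi]; infer_instance

theorem exists_rev (p : ℕ) : ∃ r : (Fin p → ℝ) ≃ᵐ (Fin p → ℝ),
    MeasurePreserving r (μpos p) (μpos p) ∧ ∀ x i, r x i = x i.rev := by
  refine ⟨MeasurableEquiv.piCongrLeft (fun _ => ℝ) Fin.revPerm, ?_, ?_⟩
  · rw [μpos_eq_pi]
    exact measurePreserving_piCongrLeft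
      (fun _ : Fin p => (volume : Measure ℝ).restrict (Set.Ici 0)) Fin.revPerm
  · intro x i
    rw [← Fin.rev_rev i]
    exact (Equiv.piCongrLeft_apply_apply (fun _ : Fin p => ℝ) Fin.revPerm x i.rev).trans
      (by rw [Fin.rev_rev])

theorem exists_split (p : ℕ) : ∃ e : ((Fin p → ℝ) × (Fin p → ℝ)) ≃ᵐ (Fin (p + p) → ℝ),
    MeasurePreserving e ((μpos p).prod (μpos p)) (μpos (p + p)) ∧
    ∀ x y j, e (x, y) j = if (j : ℕ) < p then pad x j else pad y (j - p) := by
  refine ⟨(MeasurableEquiv.sumPiEquivProdPi (fun _ : Fin p ⊕ Fin p => ℝ)).symm.trans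
    (MeasurableEquiv.piCongrLeft (fun _ => ℝ) finSumFinEquiv), ?_, ?_⟩
  · rw [μpos_eq_pi, μpos_eq_pi]
    exact (measurePreserving_piCongrLeft
      (fun _ : Fin (p + p) => (volume : Measure ℝ).restrict (Set.Ici 0)) finSumFinEquiv).comp
      (measurePreserving_sumPiEquivProdPi_symm
        (fun _ : Fin p ⊕ Fin p => (volume : Measure ℝ).restrict (Set.Ici 0)))
  · intro x y j
    obtain ⟨i, rfl⟩ := finSumFinEquiv.surjective j
    refine (Equiv.piCongrLeft_apply_apply (fun _ : Fin (p + p) => ℝ) finSumFinEquiv _ i).trans ?_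
    rcases i with i | i
    · simp [pad]
      rfl
    · simp [pad]
      rfl

theorem arc_bound (q p : ℕ) (hqp : q = p + p) (h0 : q + q - 2 * (q / 2) = q)
    (f g : (Fin q → ℝ) → ℂ) (hf : MemLp f 2 (μpos q)) (hg : MemLp g 2 (μpos q))
    (hgs : IsSymmFn q g) :
    ‖L2inner q (reindex h0 (arc q q (q / 2) f g)) g‖ ≤ ‖L2inner q f g‖ +
      L2norm q f * L2norm q (fun t => reindex h0 (arc q q (q / 2) g g) t - g t) := by
  subst hqp
  obtain ⟨r, hr, hrv⟩ := exists_rev p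
  obtain ⟨e, he, hev⟩ := exists_split p
  have hp : (p + p) / 2 = p := by omega
  have key : ∀ f g : (Fin (p + p) → ℝ) → ℂ, ∀ z : (Fin p → ℝ) × (Fin p → ℝ),
      reindex h0 (arc (p + p) (p + p) ((p + p) / 2) f g) (e z) =
        ∫ s, f (e (z.1, r s)) * g (e (s, z.2)) ∂(μpos p) := by
    intro f g z
    obtain ⟨x, y⟩ := z
    unfold reindex arc arcKer
    generalize hm : (p + p) / 2 = m at *
    subst hp
    apply integral_congr_ae
    refine Eventually.of_forall fun s => ?_
    dsimp only
    congr 2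
    · funext j
      rw [hev]
      have := j.2
      by_cases hj : (j : ℕ) < m
      · have h1 : (j : ℕ) < m + m - m := by omega
        have h2 : (j : ℕ) < m + m + (m + m) - 2 * m := by omega
        simp only [hj, h1, if_true]
        simp only [pad, h2, hj, dif_pos, hev, Fin.val_cast, if_true]
      · have h1 : ¬ (j : ℕ) < m + m - m := by omega
        have h2 : (j : ℕ) - m < m := by omega
        have h3 : m + m - 1 - (j : ℕ) < m := by omega
        simp only [hj, h1, if_false]
        simp only [pad, h2, h3, dif_pos, hrv]
        congr 1
        ext
        simp only [Fin.val_rev]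
        omega
    · funext j
      rw [hev]
      have := j.2
      by_cases hj : (j : ℕ) < m
      · simp only [hj, if_true]
      · have h2 : m + m + (j : ℕ) - 2 * m < m + m + (m + m) - 2 * m := by omega
        have h4 : ¬ m + m + (j : ℕ) - 2 * m < m := by omega
        have h3 : m + m + (j : ℕ) - 2 * m - m = (j : ℕ) - m := by omega
        simp only [hj, if_false]
        simp only [pad, h2, dif_pos, hev, Fin.val_cast, h4, if_false, h3]
  have hrr : ∀ x, r (r x) = x := by
    intro x; funext i; simp [hrv]
  have hrev : ∀ x y, (fun i : Fin (p + p) => e (x, y) i.rev) = e (r y, r x) := by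
    intro x y
    funext i
    have := i.2
    simp only [hev, Fin.val_rev, pad]
    by_cases hi : (i : ℕ) < p
    · have h1 : ¬ p + p - ((i : ℕ) + 1) < p := by omega
      have h2 : p + p - ((i : ℕ) + 1) - p < p := by omega
      simp only [hi, h1, h2, if_true, if_false, dif_pos, hrv]
      congr 1; ext; simp only [Fin.val_rev]; omega
    · have h1 : p + p - ((i : ℕ) + 1) < p := by omega
      have h2 : (i : ℕ) - p < p := by omega
      simp only [hi, h1, h2, if_true, if_false, dif_pos, hrv]
      congr 1; ext; simp only [Fin.val_rev]; omega
  have hs : ∀ᵐ z ∂((μpos p).prod (μpos p)),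
      g (e z) = (starRingEnd ℂ) (g (e (r z.2, r z.1))) := by
    have := he.quasiMeasurePreserving.ae hgs
    filter_upwards [this] with z hz
    rw [hz]
    unfold adjF
    rw [← hrev]
  have B := abstract_bound r hr hrr (F := fun z => f (e z)) (G := fun z => g (e z))
    (hf.comp_measurePreserving he) (hg.comp_measurePreserving he) hs
  unfold L2inner L2norm
  simp only [← he.integral_comp', key]
  exact B

/-- if `sup_n ‖f_n‖ < ∞`, `⟨f_n, g_n⟩ → 0` and `‖g_n ⌢_{q/2} g_n - g_n‖ → 0`,
then `⟨f_n ⌢_{q/2} g_n, g_n⟩ → 0`. -/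
theorem arc_half_contraction_inner_tendsto_zero (q : ℕ) (hq2 : 2 ≤ q) (hqe : q % 2 = 0)
    (f g : ℕ → (Fin q → ℝ) → ℂ)
    (hf : ∀ n, MeasureTheory.MemLp (f n) 2 (μpos q))
    (hg : ∀ n, MeasureTheory.MemLp (g n) 2 (μpos q))
    (hgs : ∀ n, IsSymmFn q (g n))
    (C : ℝ) (hC : ∀ n, L2norm q (f n) ≤ C)
    (h1 : Filter.Tendsto (fun n => L2inner q (f n) (g n)) Filter.atTop (nhds 0))
    (h2 : Filter.Tendsto (fun n => L2norm q (fun t =>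
        reindex (show q + q - 2 * (q / 2) = q by omega) (arc q q (q / 2) (g n) (g n)) t
          - g n t)) Filter.atTop (nhds 0)) :
    Filter.Tendsto (fun n => L2inner q
        (reindex (show q + q - 2 * (q / 2) = q by omega) (arc q q (q / 2) (f n) (g n))) (g n))
      Filter.atTop (nhds 0) := by
  have hb : ∀ n, _ := fun n => arc_bound q (q / 2) (by omega)
    (show q + q - 2 * (q / 2) = q by omega) (f n) (g n) (hf n) (hg n) (hgs n)
  have hlim := h1.norm.add (h2.const_mul C)
  simp only [norm_zero, mul_zero, add_zero] at hlim
  refine squeeze_zero_norm (fun n => (hb n).trans ?_) hlim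
  exact add_le_add le_rfl (mul_le_mul_of_nonneg_right (hC n) (Real.sqrt_nonneg _))

end
end

section
/- Let q ≥ 2 be an even integer, let λ_i > 0 for i ∈ ℕ, and let {f_n^{(i)} : n, i ∈ ℕ} be a bi-indexed family of symmetric functions in L²(ℝ₊^q) such that for all i, j ∈ ℕ: ⟨f_n^{(i)}, f_n^{(j)}⟩ → δ_{ij} λ_i as n → ∞, ‖f_n^{(i)} ⌢_{q/2} f_n^{(i)} − f_n^{(i)}‖ → 0, and ‖f_n^{(i)} ⌢_{q/2} f_n^{(j)}‖ → 0 whenever i ≠ j. Then for every k ≥ 1 and all indices i₁, …, i_{k+1} ∈ ℕ, the inner product ⟨f_n^{(i₁)} ⌢_{q/2} f_n^{(i₂)} ⌢_{q/2} ⋯ ⌢_{q/2} f_n^{(i_k)}, f_n^{(i_{k+1})}⟩ (iterated contraction bracketed from the left) converges to λ_{i₁} if i₁ = i₂ = ⋯ = i_{k+1}, and converges to 0 otherwise. -/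
open MeasureTheory Filter Topology

noncomputable section

lemma sq_eLpNorm {α : Type*} [MeasurableSpace α] (μ : Measure α) (f : α → ℂ) :
    eLpNorm f 2 μ ^ 2 = ∫⁻ x, ‖f x‖ₑ ^ 2 ∂μ := by
  have h := eLpNorm_nnreal_pow_eq_lintegral (μ := μ) (f := f) (p := 2) (by norm_num)
  simpa using h

lemma enorm_integral_mul_le {α : Type*} [MeasurableSpace α] {μ : Measure α} {f g : α → ℂ}
    (hf : AEStronglyMeasurable f μ) (hg : AEStronglyMeasurable g μ) :
    ‖∫ x, f x * g x ∂μ‖ₑ ≤ eLpNorm f 2 μ * eLpNorm g 2 μ := by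
  refine (enorm_integral_le_lintegral_enorm _).trans ?_
  have := eLpNorm_smul_le_mul_eLpNorm (p := 2) (q := 2) (r := 1) hg hf
  rw [eLpNorm_one_eq_lintegral_enorm] at this
  simpa using this

section abs
variable {X : Type*} [MeasurableSpace X] (ν : Measure X) [SigmaFinite ν]

lemma slice_left {A : X × X → ℂ} (hA : MemLp A 2 (ν.prod ν)) :
    (∀ᵐ x ∂ν, MemLp (fun s => A (x, s)) 2 ν) ∧
    AEMeasurable (fun x => eLpNorm (fun s => A (x, s)) 2 ν ^ 2) ν ∧
    ∫⁻ x, eLpNorm (fun s => A (x, s)) 2 ν ^ 2 ∂ν = eLpNorm A 2 (ν.prod ν) ^ 2 := by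
  have hm : AEMeasurable (fun z => ‖A z‖ₑ ^ 2) (ν.prod ν) :=
    hA.aestronglyMeasurable.enorm.pow_const 2
  have h2 : AEMeasurable (fun x => eLpNorm (fun s => A (x, s)) 2 ν ^ 2) ν := by
    simp_rw [sq_eLpNorm]
    exact hm.lintegral_prod_right'
  have h3 : ∫⁻ x, eLpNorm (fun s => A (x, s)) 2 ν ^ 2 ∂ν = eLpNorm A 2 (ν.prod ν) ^ 2 := by
    simp_rw [sq_eLpNorm]
    rw [lintegral_prod _ hm]
  refine ⟨?_, h2, h3⟩
  have h4 : ∀ᵐ x ∂ν, eLpNorm (fun s => A (x, s)) 2 ν ^ 2 < ⊤ := by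
    apply ae_lt_top' h2
    rw [h3]
    exact ENNReal.pow_ne_top hA.eLpNorm_ne_top
  filter_upwards [h4, hA.aestronglyMeasurable.prodMk_left] with x h5 h6
  refine ⟨h6, ?_⟩
  by_contra h
  rw [not_lt, top_le_iff] at h
  simp [h] at h5

lemma hs_abs {A B : X × X → ℂ} (hA : MemLp A 2 (ν.prod ν)) (hB : MemLp B 2 (ν.prod ν)) :
    (∀ᵐ z ∂(ν.prod ν), Integrable (fun s => A (z.1, s) * B (s, z.2)) ν) ∧
    MemLp (fun z : X × X => ∫ s, A (z.1, s) * B (s, z.2) ∂ν) 2 (ν.prod ν) ∧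
    eLpNorm (fun z : X × X => ∫ s, A (z.1, s) * B (s, z.2) ∂ν) 2 (ν.prod ν) ≤
      eLpNorm A 2 (ν.prod ν) * eLpNorm B 2 (ν.prod ν) := by
  obtain ⟨a1, a2, a3⟩ := slice_left ν hA
  have hsw : MeasurePreserving (Prod.swap : X × X → X × X) (ν.prod ν) (ν.prod ν) :=
    Measure.measurePreserving_swap
  have hB' := hB.comp_measurePreserving hsw
  obtain ⟨b1, b2, b3⟩ := slice_left ν hB'
  rw [eLpNorm_comp_measurePreserving hB.aestronglyMeasurable hsw] at b3
  simp only [Function.comp_apply, Prod.swap_prod_mk] at b1 b2 b3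
  have a1' : ∀ᵐ z ∂(ν.prod ν), MemLp (fun s => A (z.1, s)) 2 ν :=
    Measure.quasiMeasurePreserving_fst.ae a1
  have b1' : ∀ᵐ z ∂(ν.prod ν), MemLp (fun s => B (s, z.2)) 2 ν :=
    Measure.quasiMeasurePreserving_snd.ae b1
  have hmeas : AEStronglyMeasurable (fun z : X × X => ∫ s, A (z.1, s) * B (s, z.2) ∂ν)
      (ν.prod ν) := by
    have hA3 : AEStronglyMeasurable (fun w : (X × X) × X => A (w.1.1, w.2))
        ((ν.prod ν).prod ν) :=
      hA.aestronglyMeasurable.comp_quasiMeasurePreserving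
        (QuasiMeasurePreserving.prodMap Measure.quasiMeasurePreserving_fst
          (Measure.QuasiMeasurePreserving.id ν))
    have hB3 : AEStronglyMeasurable (fun w : (X × X) × X => B (w.2, w.1.2))
        ((ν.prod ν).prod ν) :=
      hB'.aestronglyMeasurable.comp_quasiMeasurePreserving
        (QuasiMeasurePreserving.prodMap Measure.quasiMeasurePreserving_snd
          (Measure.QuasiMeasurePreserving.id ν))
    exact (hA3.mul hB3).integral_prod_right'
  have hle : eLpNorm (fun z : X × X => ∫ s, A (z.1, s) * B (s, z.2) ∂ν) 2 (ν.prod ν) ≤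
      eLpNorm A 2 (ν.prod ν) * eLpNorm B 2 (ν.prod ν) := by
    rw [← ENNReal.pow_le_pow_left_iff (n := 2) (by norm_num), mul_pow, ← a3, ← b3,
      ← lintegral_prod_mul a2 b2, sq_eLpNorm]
    apply lintegral_mono_ae
    filter_upwards [a1', b1'] with z h1 h2
    rw [← mul_pow]
    gcongr
    exact enorm_integral_mul_le h1.1 h2.1
  refine ⟨?_, ⟨hmeas, ?_⟩, hle⟩
  · filter_upwards [a1', b1'] with z h1 h2
    exact h1.integrable_mul h2
  · exact hle.trans_lt (ENNReal.mul_lt_top hA.2 hB.2)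

end abs

/-- gluing two tuples along an equivalence of index sets -/
def glue {p q : ℕ} (σ : Fin p ⊕ Fin p ≃ Fin q) (z : (Fin p → ℝ) × (Fin p → ℝ)) : Fin q → ℝ :=
  fun j => Sum.elim z.1 z.2 (σ.symm j)

lemma measurableSet_posOrthant (n : ℕ) : MeasurableSet (posOrthant n) := by
  have : posOrthant n = Set.univ.pi fun _ => Set.Ici 0 := by
    ext x; simp only [posOrthant, Set.mem_univ_pi, Set.mem_Ici]; rfl
  rw [this]
  exact MeasurableSet.univ_pi fun _ => measurableSet_Ici

def glueEquiv {p q : ℕ} (σ : Fin p ⊕ Fin p ≃ Fin q) :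
    ((Fin p → ℝ) × (Fin p → ℝ)) ≃ᵐ (Fin q → ℝ) :=
  (MeasurableEquiv.sumPiEquivProdPi (fun _ : Fin p ⊕ Fin p => ℝ)).symm.trans
    (MeasurableEquiv.piCongrLeft (fun _ : Fin q => ℝ) σ)

lemma glueEquiv_coe {p q : ℕ} (σ : Fin p ⊕ Fin p ≃ Fin q) :
    (glueEquiv σ : (Fin p → ℝ) × (Fin p → ℝ) → (Fin q → ℝ)) = glue σ := by
  funext z j
  obtain ⟨i, rfl⟩ := σ.surjective j
  have : (glueEquiv σ) z (σ i) = (MeasurableEquiv.sumPiEquivProdPi (fun _ : Fin p ⊕ Fin p => ℝ)).symm z i :=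
    Equiv.piCongrLeft_apply_apply (fun _ : Fin q => ℝ) σ _ i
  rw [this]
  rcases i with i | i <;> simp [glue] <;> rfl

lemma glue_mp {p q : ℕ} (σ : Fin p ⊕ Fin p ≃ Fin q) :
    MeasurePreserving (glue σ) ((μpos p).prod (μpos p)) (μpos q) := by
  have h : MeasurePreserving (glue σ) (volume : Measure ((Fin p → ℝ) × (Fin p → ℝ))) volume := by
    rw [← glueEquiv_coe]
    exact (volume_measurePreserving_piCongrLeft (fun _ : Fin q => ℝ) σ).comp
      (volume_measurePreserving_sumPiEquivProdPi_symm (fun _ : Fin p ⊕ Fin p => ℝ))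
  have h2 := h.restrict_preimage (measurableSet_posOrthant q)
  have h3 : glue σ ⁻¹' posOrthant q = posOrthant p ×ˢ posOrthant p := by
    ext z
    simp only [Set.mem_preimage, Set.mem_prod, posOrthant, Set.mem_ofPred_eq, glue]
    constructor
    · intro H
      exact ⟨fun i => by simpa using H (σ (.inl i)), fun i => by simpa using H (σ (.inr i))⟩
    · rintro ⟨h1, h2⟩ j
      rcases σ.symm j with i | i
      · exact h1 i
      · exact h2 i
  rw [h3, Measure.volume_eq_prod, ← Measure.prod_restrict] at h2
  exact h2

lemma glue_emb {p q : ℕ} (σ : Fin p ⊕ Fin p ≃ Fin q) : MeasurableEmbedding (glue σ) := by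
  rw [← glueEquiv_coe]; exact (glueEquiv σ).measurableEmbedding

instance (p : ℕ) : SigmaFinite (μpos p) := by unfold μpos; infer_instance

def sig2 (p : ℕ) : Fin p ⊕ Fin p ≃ Fin (p + p) := finSumFinEquiv
def sig1 (p : ℕ) : Fin p ⊕ Fin p ≃ Fin (p + p) :=
  (Equiv.sumCongr (Equiv.refl _) Fin.revPerm).trans finSumFinEquiv

lemma contrHalf_kernel (p : ℕ) (F G : (Fin (p + p) → ℝ) → ℂ) (z : (Fin p → ℝ) × (Fin p → ℝ)) :
    contrHalf (p + p) F G (glue (sig2 p) z) =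
      ∫ s, F (glue (sig1 p) (z.1, s)) * G (glue (sig2 p) (s, z.2)) ∂(μpos p) := by
  have hp : (p + p) / 2 = p := by omega
  unfold contrHalf μpos
  rw [hp]
  congr 1
  funext s
  congr 2
  · funext j
    obtain ⟨i, rfl⟩ := (sig1 p).surjective j
    rcases i with i | i
    · have h1 : ((sig1 p (.inl i) : Fin (p + p)) : ℕ) = i := by simp [sig1]
      have h2 : glue (sig1 p) (z.1, s) (sig1 p (.inl i)) = z.1 i := by simp [glue]
      have h3 : pad (glue (sig2 p) z) i = z.1 i := by
        have h4 : (⟨(i : ℕ), by omega⟩ : Fin (p + p)) = sig2 p (.inl i) := by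
          ext; simp [sig2]
        rw [pad, dif_pos (by omega), h4]
        simp [glue]
      rw [h1, h2, if_pos (by omega), h3]
    · have h1 : ((sig1 p (.inr i) : Fin (p + p)) : ℕ) = p + (p - (i + 1)) := by simp [sig1, add_comm]
      have h2 : glue (sig1 p) (z.1, s) (sig1 p (.inr i)) = s i := by simp [glue]
      have h5 : p + p - 1 - (p + (p - ((i : ℕ) + 1))) = i := by omega
      rw [h1, h2, if_neg (by omega), h5, pad, dif_pos i.2]
  · funext j
    obtain ⟨i, rfl⟩ := (sig2 p).surjective j
    rcases i with i | i
    · simp [glue, sig2, pad]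
    · have h1 : ((sig2 p (.inr i) : Fin (p + p)) : ℕ) = p + i := by simp [sig2, add_comm]
      have h2 : glue (sig2 p) (s, z.2) (sig2 p (.inr i)) = z.2 i := by simp [glue]
      have h3 : pad (glue (sig2 p) z) (p + i) = z.2 i := by
        have h4 : (⟨p + (i : ℕ), by omega⟩ : Fin (p + p)) = sig2 p (.inr i) := by
          ext; simp [sig2, add_comm]
        rw [pad, dif_pos (by omega), h4]
        simp [glue]
      have h5 : p + p + (p + (i : ℕ)) - 2 * p = p + i := by omega
      rw [h1, h2, if_neg (by omega), h5, h3]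

lemma contr_main (p : ℕ) {F G : (Fin (p + p) → ℝ) → ℂ}
    (hF : MemLp F 2 (μpos (p + p))) (hG : MemLp G 2 (μpos (p + p))) :
    (∀ᵐ z ∂((μpos p).prod (μpos p)),
      Integrable (fun s => F (glue (sig1 p) (z.1, s)) * G (glue (sig2 p) (s, z.2))) (μpos p)) ∧
    MemLp (contrHalf (p + p) F G) 2 (μpos (p + p)) ∧
    eLpNorm (contrHalf (p + p) F G) 2 (μpos (p + p)) ≤
      eLpNorm F 2 (μpos (p + p)) * eLpNorm G 2 (μpos (p + p)) := by
  obtain ⟨h1, h2, h3⟩ := hs_abs (μpos p) (hF.comp_measurePreserving (glue_mp (sig1 p)))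
    (hG.comp_measurePreserving (glue_mp (sig2 p)))
  rw [eLpNorm_comp_measurePreserving hF.1 (glue_mp _),
    eLpNorm_comp_measurePreserving hG.1 (glue_mp _)] at h3
  have hc : (contrHalf (p + p) F G) ∘ glue (sig2 p) = fun z : (Fin p → ℝ) × (Fin p → ℝ) =>
      ∫ s, (F ∘ glue (sig1 p)) (z.1, s) * (G ∘ glue (sig2 p)) (s, z.2) ∂(μpos p) := by
    funext z
    exact contrHalf_kernel p F G z
  rw [← hc] at h2 h3
  have hm : AEStronglyMeasurable (contrHalf (p + p) F G) (μpos (p + p)) := by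
    rw [← (glue_mp (sig2 p)).map_eq, (glue_emb (sig2 p)).aestronglyMeasurable_map_iff]
    exact h2.1
  rw [eLpNorm_comp_measurePreserving hm (glue_mp _)] at h3
  exact ⟨h1, ⟨hm, h3.trans_lt (ENNReal.mul_lt_top hF.2 hG.2)⟩, h3⟩

lemma contr_sub (p : ℕ) {F F' G : (Fin (p + p) → ℝ) → ℂ}
    (hF : MemLp F 2 (μpos (p + p))) (hF' : MemLp F' 2 (μpos (p + p)))
    (hG : MemLp G 2 (μpos (p + p))) :
    contrHalf (p + p) (F - F') G =ᵐ[μpos (p + p)]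
      contrHalf (p + p) F G - contrHalf (p + p) F' G := by
  rw [← (glue_mp (sig2 p)).map_eq]
  refine (glue_emb (sig2 p)).ae_map_iff.2 ?_
  filter_upwards [(contr_main p hF hG).1, (contr_main p hF' hG).1] with z h1 h2
  simp only [Pi.sub_apply, contrHalf_kernel, sub_mul]
  exact integral_sub h1 h2

lemma eLpNorm_eq_L2norm {q : ℕ} {f : (Fin q → ℝ) → ℂ} (hf : MemLp f 2 (μpos q)) :
    eLpNorm f 2 (μpos q) = ENNReal.ofReal (L2norm q f) := by
  rw [MemLp.eLpNorm_eq_integral_rpow_norm (by norm_num) (by norm_num) hf, L2norm,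
    Real.sqrt_eq_rpow]
  simp

lemma L2inner_self {q : ℕ} (f : (Fin q → ℝ) → ℂ) :
    (L2inner q f f).re = ∫ x, ‖f x‖ ^ 2 ∂(μpos q) := by
  have : L2inner q f f = ((∫ x, ‖f x‖ ^ 2 ∂(μpos q) : ℝ) : ℂ) := by
    rw [L2inner, ← integral_complex_ofReal]
    congr 1; funext x
    rw [Complex.mul_conj, Complex.normSq_eq_norm_sq]
  rw [this, Complex.ofReal_re]

lemma L2inner_sub {q : ℕ} {F F' g : (Fin q → ℝ) → ℂ} (hF : MemLp F 2 (μpos q))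
    (hF' : MemLp F' 2 (μpos q)) (hg : MemLp g 2 (μpos q)) :
    L2inner q (F - F') g = L2inner q F g - L2inner q F' g := by
  have hg' : MemLp (fun x => (starRingEnd ℂ) (g x)) 2 (μpos q) := hg.star
  simp only [L2inner, Pi.sub_apply, sub_mul]
  exact integral_sub (hF.integrable_mul hg') (hF'.integrable_mul hg')

lemma L2inner_le {q : ℕ} {F g : (Fin q → ℝ) → ℂ} (hF : MemLp F 2 (μpos q))
    (hg : MemLp g 2 (μpos q)) :
    ‖L2inner q F g‖ₑ ≤ eLpNorm F 2 (μpos q) * eLpNorm g 2 (μpos q) := by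
  have hg' : MemLp (fun x => (starRingEnd ℂ) (g x)) 2 (μpos q) := hg.star
  refine (enorm_integral_mul_le hF.1 hg'.1).trans_eq ?_
  congr 1
  apply eLpNorm_congr_norm_ae
  exact ae_of_all _ fun x => by simp

lemma tendsto_L2inner_zero {q : ℕ} {F g : ℕ → (Fin q → ℝ) → ℂ} {c : ENNReal} (hc : c ≠ ⊤)
    (hF : ∀ n, MemLp (F n) 2 (μpos q)) (hg : ∀ n, MemLp (g n) 2 (μpos q))
    (hF0 : Tendsto (fun n => eLpNorm (F n) 2 (μpos q)) atTop (𝓝 0))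
    (hgc : Tendsto (fun n => eLpNorm (g n) 2 (μpos q)) atTop (𝓝 c)) :
    Tendsto (fun n => L2inner q (F n) (g n)) atTop (𝓝 0) := by
  rw [tendsto_zero_iff_enorm_tendsto_zero]
  have h := ENNReal.Tendsto.mul hF0 (Or.inr hc) hgc (Or.inr ENNReal.zero_ne_top)
  rw [zero_mul] at h
  exact tendsto_of_tendsto_of_tendsto_of_le_of_le tendsto_const_nhds h (fun _ => zero_le)
    (fun n => L2inner_le (hF n) (hg n))

/-- iterated `q/2`-contractions paired with one more function converge to
`λ_{i₁}` when all indices agree, and to `0` otherwise. -/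
theorem iterated_half_contraction_inner_limit (q : ℕ) (hq2 : 2 ≤ q) (hqe : q % 2 = 0)
    (lam : ℕ → ℝ) (hlam : ∀ i, 0 < lam i)
    (f : ℕ → ℕ → (Fin q → ℝ) → ℂ)
    (hmem : ∀ n i, MeasureTheory.MemLp (f n i) 2 (μpos q))
    (hsym : ∀ n i, IsSymmFn q (f n i))
    (hinner : ∀ i j, Filter.Tendsto (fun n => L2inner q (f n i) (f n j)) Filter.atTop
      (nhds (if i = j then (lam i : ℂ) else 0)))
    (hdiag : ∀ i, Filter.Tendsto
      (fun n => L2norm q (fun t => contrHalf q (f n i) (f n i) t - f n i t))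
      Filter.atTop (nhds 0))
    (hoff : ∀ i j, i ≠ j → Filter.Tendsto
      (fun n => L2norm q (contrHalf q (f n i) (f n j))) Filter.atTop (nhds 0))
    (k : ℕ) (hk : 1 ≤ k) (idx : ℕ → ℕ) :
    ((∀ a b, 1 ≤ a → a ≤ k + 1 → 1 ≤ b → b ≤ k + 1 → idx a = idx b) →
      Filter.Tendsto (fun n => L2inner q
          (((List.range (k - 1)).map fun j => f n (idx (j + 2))).foldl
            (contrHalf q) (f n (idx 1)))
          (f n (idx (k + 1))))
        Filter.atTop (nhds (lam (idx 1) : ℂ))) ∧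
    ((¬ ∀ a b, 1 ≤ a → a ≤ k + 1 → 1 ≤ b → b ≤ k + 1 → idx a = idx b) →
      Filter.Tendsto (fun n => L2inner q
          (((List.range (k - 1)).map fun j => f n (idx (j + 2))).foldl
            (contrHalf q) (f n (idx 1)))
          (f n (idx (k + 1))))
        Filter.atTop (nhds 0)) := by
  obtain ⟨p, rfl⟩ : ∃ p, q = p + p := ⟨q / 2, by omega⟩
  have hN : ∀ i, Tendsto (fun n => eLpNorm (f n i) 2 (μpos (p + p))) atTop
      (𝓝 (ENNReal.ofReal (Real.sqrt (lam i)))) := by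
    intro i
    have h := hinner i i
    rw [if_pos rfl] at h
    have h2 := (Complex.continuous_re.tendsto _).comp h
    have h3 := ENNReal.tendsto_ofReal ((Real.continuous_sqrt.tendsto _).comp h2)
    refine h3.congr fun n => ?_
    rw [eLpNorm_eq_L2norm (hmem n i), L2norm, ← L2inner_self]
    rfl
  have hdiag' : ∀ i, Tendsto (fun n => eLpNorm (contrHalf (p + p) (f n i) (f n i) - f n i) 2
      (μpos (p + p))) atTop (𝓝 0) := by
    intro i
    have h := ENNReal.tendsto_ofReal (hdiag i)
    rw [ENNReal.ofReal_zero] at h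
    refine h.congr fun n => ?_
    rw [eLpNorm_eq_L2norm ((contr_main p (hmem n i) (hmem n i)).2.1.sub (hmem n i))]
    rfl
  have hoff' : ∀ i j, i ≠ j → Tendsto (fun n => eLpNorm (contrHalf (p + p) (f n i) (f n j)) 2
      (μpos (p + p))) atTop (𝓝 0) := by
    intro i j hij
    have h := ENNReal.tendsto_ofReal (hoff i j hij)
    rw [ENNReal.ofReal_zero] at h
    refine h.congr fun n => ?_
    rw [eLpNorm_eq_L2norm (contr_main p (hmem n i) (hmem n j)).2.1]
  -- products of a null sequence with a member of the family
  have hprod : ∀ (G : ℕ → (Fin (p + p) → ℝ) → ℂ) (j : ℕ),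
      (∀ n, MemLp (G n) 2 (μpos (p + p))) →
      Tendsto (fun n => eLpNorm (G n) 2 (μpos (p + p))) atTop (𝓝 0) →
      Tendsto (fun n => eLpNorm (contrHalf (p + p) (G n) (f n j)) 2 (μpos (p + p)))
        atTop (𝓝 0) := by
    intro G j hG h0
    have h := ENNReal.Tendsto.mul h0 (Or.inr ENNReal.ofReal_ne_top) (hN j)
      (Or.inr ENNReal.zero_ne_top)
    rw [zero_mul] at h
    exact tendsto_of_tendsto_of_tendsto_of_le_of_le tendsto_const_nhds h (fun _ => zero_le)
      (fun n => (contr_main p (hG n) (hmem n j)).2.2)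
  have key : ∀ m : ℕ, ∀ F : ℕ → (Fin (p + p) → ℝ) → ℂ,
      (∀ n, F n = ((List.range m).map fun j => f n (idx (j + 2))).foldl
            (contrHalf (p + p)) (f n (idx 1))) →
      (∀ n, MemLp (F n) 2 (μpos (p + p))) ∧
      (((∀ a, 1 ≤ a → a ≤ m + 1 → idx a = idx 1) ∧
        Tendsto (fun n => eLpNorm (F n - f n (idx 1)) 2 (μpos (p + p))) atTop (𝓝 0)) ∨
       ((∃ a, 1 ≤ a ∧ a ≤ m + 1 ∧ idx a ≠ idx 1) ∧
        Tendsto (fun n => eLpNorm (F n) 2 (μpos (p + p))) atTop (𝓝 0))) := by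
    intro m
    induction m with
    | zero =>
      intro F hF
      have hF' : F = fun n => f n (idx 1) := by funext n; simp [hF n]
      subst hF'
      refine ⟨fun n => hmem n _, Or.inl ⟨?_, by simp⟩⟩
      intro a h1 h2
      have : a = 1 := by omega
      rw [this]
    | succ m ih =>
      intro F hF
      obtain ⟨H1, H2⟩ := ih _ (fun n => rfl)
      set G : ℕ → (Fin (p + p) → ℝ) → ℂ := fun n =>
        ((List.range m).map fun j => f n (idx (j + 2))).foldl
            (contrHalf (p + p)) (f n (idx 1)) with hGdef
      have hFG : F = fun n => contrHalf (p + p) (G n) (f n (idx (m + 2))) := by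
        funext n
        rw [hF n, List.range_succ, List.map_append, List.foldl_append]
        rfl
      subst hFG
      have hFm : ∀ n, MemLp (contrHalf (p + p) (G n) (f n (idx (m + 2)))) 2 (μpos (p + p)) :=
        fun n => (contr_main p (H1 n) (hmem n _)).2.1
      refine ⟨hFm, ?_⟩
      rcases H2 with ⟨hall, h0⟩ | ⟨⟨a, ha1, ha2, ha3⟩, h0⟩
      · have hd := hprod (fun n => G n - f n (idx 1)) (idx (m + 2))
          (fun n => (H1 n).sub (hmem n _)) h0
        have hd' : Tendsto (fun n => eLpNorm (contrHalf (p + p) (G n) (f n (idx (m + 2)))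
            - contrHalf (p + p) (f n (idx 1)) (f n (idx (m + 2)))) 2 (μpos (p + p)))
            atTop (𝓝 0) :=
          hd.congr fun n => eLpNorm_congr_ae (contr_sub p (H1 n) (hmem n _) (hmem n _))
        by_cases hi : idx (m + 2) = idx 1
        · left
          refine ⟨?_, ?_⟩
          · intro a h1 h2
            rcases Nat.lt_or_ge a (m + 2) with h | h
            · exact hall a h1 (by omega)
            · have : a = m + 2 := by omega
              rw [this, hi]
          · rw [hi] at hd' hFm ⊢
            have hs := hd'.add (hdiag' (idx 1))
            rw [add_zero] at hs
            refine tendsto_of_tendsto_of_tendsto_of_le_of_le tendsto_const_nhds hs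
              (fun _ => zero_le) (fun n => ?_)
            have hc := (contr_main p (hmem n (idx 1)) (hmem n (idx 1))).2.1
            have := eLpNorm_add_le ((hFm n).sub hc).1 (hc.sub (hmem n (idx 1))).1
              (p := 2) (by norm_num)
            rwa [sub_add_sub_cancel] at this
        · right
          refine ⟨⟨m + 2, by omega, by omega, hi⟩, ?_⟩
          have hs := hd'.add (hoff' (idx 1) (idx (m + 2)) (Ne.symm hi))
          rw [add_zero] at hs
          refine tendsto_of_tendsto_of_tendsto_of_le_of_le tendsto_const_nhds hs
            (fun _ => zero_le) (fun n => ?_)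
          have hc := (contr_main p (hmem n (idx 1)) (hmem n (idx (m + 2)))).2.1
          have := eLpNorm_add_le ((hFm n).sub hc).1 hc.1 (p := 2) (by norm_num)
          rwa [sub_add_cancel] at this
      · right
        exact ⟨⟨a, ha1, by omega, ha3⟩, hprod G _ H1 h0⟩
  obtain ⟨H1, H2⟩ := key (k - 1) _ (fun n => rfl)
  have hk1 : k - 1 + 1 = k := by omega
  rw [hk1] at H2
  have hlim : (∀ a, 1 ≤ a → a ≤ k → idx a = idx 1) →
      Tendsto (fun n => eLpNorm ((((List.range (k - 1)).map fun j => f n (idx (j + 2))).foldl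
            (contrHalf (p + p)) (f n (idx 1))) - f n (idx 1)) 2 (μpos (p + p))) atTop (𝓝 0) →
      Tendsto (fun n => L2inner (p + p)
          (((List.range (k - 1)).map fun j => f n (idx (j + 2))).foldl
            (contrHalf (p + p)) (f n (idx 1)))
          (f n (idx (k + 1))))
        atTop (𝓝 (if idx 1 = idx (k + 1) then (lam (idx 1) : ℂ) else 0)) := by
    intro _ h0
    have h1 := tendsto_L2inner_zero ENNReal.ofReal_ne_top
      (fun n => (H1 n).sub (hmem n (idx 1))) (fun n => hmem n (idx (k + 1))) h0 (hN (idx (k + 1)))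
    have h2 := h1.add (hinner (idx 1) (idx (k + 1)))
    rw [zero_add] at h2
    refine h2.congr fun n => ?_
    rw [L2inner_sub (H1 n) (hmem n _) (hmem n _), sub_add_cancel]
  constructor
  · intro hall
    rcases H2 with ⟨h1, h0⟩ | ⟨⟨a, ha1, ha2, ha3⟩, _⟩
    · have := hlim h1 h0
      rwa [if_pos (hall 1 (k + 1) le_rfl (by omega) (by omega) le_rfl)] at this
    · exact absurd (hall a 1 ha1 (by omega) le_rfl (by omega)) ha3
  · intro hnot
    rcases H2 with ⟨h1, h0⟩ | ⟨_, h0⟩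
    · have := hlim h1 h0
      rwa [if_neg] at this
      intro he
      apply hnot
      have hh : ∀ a, 1 ≤ a → a ≤ k + 1 → idx a = idx 1 := by
        intro a ha1 ha2
        rcases Nat.lt_or_ge a (k + 1) with h | h
        · exact h1 a ha1 (by omega)
        · have : a = k + 1 := by omega
          rw [this, he]
      intro a b ha1 ha2 hb1 hb2
      rw [hh a ha1 ha2, hh b hb1 hb2]
    · exact tendsto_L2inner_zero ENNReal.ofReal_ne_top H1 (fun n => hmem n (idx (k + 1))) h0
        (hN (idx (k + 1)))

end
end

section
/- Let q ≥ 2 be an integer and let f, g ∈ L²(ℝ₊^q) be such that |f| ≤ M_f and |g| ≤ M_g almost everywhere, f vanishes almost everywhere outside a q-dimensional square S_f ⊂ ℝ₊^q, and g vanishes almost everywhere outside a q-dimensional square S_g ⊂ ℝ₊^q. Then for every integer 1 ≤ r ≤ q, the star contraction f ⋆_r^{r−1} g belongs to L²(ℝ₊^{2q−2r+1}) and ‖f ⋆_r^{r−1} g‖_{L²(ℝ₊^{2q−2r+1})} ≤ ( M_f M_g (μ(S_f) μ(S_g))^{(q−1)/(2q)} ‖f‖ ‖g‖ )^{1/2}.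 -/
open MeasureTheory Filter Topology

noncomputable section

open scoped ENNReal

/-- Lebesgue measure on the half line. -/
def halfLine : Measure ℝ := volume.restrict (Set.Ici 0)

instance : SigmaFinite halfLine := by unfold halfLine; infer_instance

/-- Product of half-line measures. -/
def piHalf (ι : Type) [Fintype ι] : Measure (ι → ℝ) := Measure.pi fun _ => halfLine

instance (ι : Type) [Fintype ι] : SigmaFinite (piHalf ι) := by unfold piHalf; infer_instance

lemma posOrthant_eq (n : ℕ) : posOrthant n = Set.univ.pi fun _ => Set.Ici 0 := by
  ext x; simp [posOrthant, Pi.le_def]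

lemma μpos_eq (n : ℕ) : μpos n = piHalf (Fin n) := by
  unfold μpos piHalf halfLine
  rw [posOrthant_eq, volume_pi, Measure.restrict_pi_pi]

lemma exists_join {ι κ ρ : Type} [Fintype ι] [Fintype κ] [Fintype ρ] (e : ι ⊕ κ ≃ ρ) :
    ∃ J : ((ι → ℝ) × (κ → ℝ)) ≃ᵐ (ρ → ℝ),
      MeasurePreserving J ((piHalf ι).prod (piHalf κ)) (piHalf ρ) ∧
      ∀ u v k, J (u, v) (e k) = Sum.elim u v k := by
  refine ⟨(MeasurableEquiv.sumPiEquivProdPi (fun _ : ι ⊕ κ => ℝ)).symm.trans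
    (MeasurableEquiv.piCongrLeft (fun _ : ρ => ℝ) e), ?_, ?_⟩
  · have h1 := measurePreserving_sumPiEquivProdPi_symm (fun _ : ι ⊕ κ => halfLine)
    have h2 := measurePreserving_piCongrLeft (fun _ : ρ => halfLine) e
    exact h2.comp h1
  · intro u v k
    have := Equiv.piCongrLeft_apply_apply (fun _ : ρ => ℝ) e
      ((MeasurableEquiv.sumPiEquivProdPi (fun _ : ι ⊕ κ => ℝ)).symm (u, v)) k
    refine Eq.trans this ?_
    rcases k with k | k <;> rfl

lemma exists_join_left {ι κ τ ρ : Type} [Fintype ι] [Fintype κ] [Fintype τ] [Fintype ρ]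
    (e : (ι ⊕ κ) ⊕ τ ≃ ρ) :
    ∃ J : (((ι → ℝ) × (κ → ℝ)) × (τ → ℝ)) ≃ᵐ (ρ → ℝ),
      MeasurePreserving J (((piHalf ι).prod (piHalf κ)).prod (piHalf τ)) (piHalf ρ) ∧
      ∀ u v w k, J ((u, v), w) (e k) = Sum.elim (Sum.elim u v) w k := by
  obtain ⟨J, hJ, hJ'⟩ := exists_join e
  obtain ⟨K, hK, hK'⟩ := exists_join (Equiv.refl (ι ⊕ κ))
  refine ⟨(MeasurableEquiv.prodCongr K (MeasurableEquiv.refl _)).trans J, ?_, ?_⟩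
  · exact hJ.comp (hK.prod (MeasurePreserving.id _))
  · intro u v w k
    have hh : K (u, v) = Sum.elim u v := funext fun k => hK' u v k
    refine (hJ' (K (u, v)) w k).trans ?_
    rw [hh]

lemma exists_join_right {ι κ τ ρ : Type} [Fintype ι] [Fintype κ] [Fintype τ] [Fintype ρ]
    (e : ι ⊕ (κ ⊕ τ) ≃ ρ) :
    ∃ J : ((ι → ℝ) × ((κ → ℝ) × (τ → ℝ))) ≃ᵐ (ρ → ℝ),
      MeasurePreserving J ((piHalf ι).prod ((piHalf κ).prod (piHalf τ))) (piHalf ρ) ∧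
      ∀ u v w k, J (u, (v, w)) (e k) = Sum.elim u (Sum.elim v w) k := by
  obtain ⟨J, hJ, hJ'⟩ := exists_join e
  obtain ⟨K, hK, hK'⟩ := exists_join (Equiv.refl (κ ⊕ τ))
  refine ⟨(MeasurableEquiv.prodCongr (MeasurableEquiv.refl _) K).trans J, ?_, ?_⟩
  · exact hJ.comp ((MeasurePreserving.id _).prod hK)
  · intro u v w k
    have hh : K (v, w) = Sum.elim v w := funext fun k => hK' v w k
    refine (hJ' u (K (v, w)) k).trans ?_
    rw [hh]

lemma cs_lintegral {α : Type*} [MeasurableSpace α] (μ : Measure α) {f g : α → ℝ≥0∞}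
    (hf : AEMeasurable f μ) (hg : AEMeasurable g μ) :
    ∫⁻ a, f a * g a ∂μ ≤ (∫⁻ a, f a ^ 2 ∂μ) ^ (1 / 2 : ℝ) * (∫⁻ a, g a ^ 2 ∂μ) ^ (1 / 2 : ℝ) := by
  have := ENNReal.lintegral_mul_le_Lp_mul_Lq μ (p := 2) (q := 2)
    Real.HolderConjugate.two_two hf hg
  simpa using this

/-- The abstract bound. -/
lemma abstract_bound_s9 {T X S : Type*} [MeasurableSpace T] [MeasurableSpace X] [MeasurableSpace S]
    (τ : Measure T) (χ : Measure X) (σ : Measure S) [SigmaFinite τ] [SigmaFinite χ] [SigmaFinite σ]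
    (φ ψ : (T × X) × S → ℂ) (hφ : StronglyMeasurable φ) (hψ : StronglyMeasurable ψ)
    (Cf Cg : ℝ≥0∞)
    (hCf : ∀ t, ∫⁻ x, ∫⁻ s, ‖φ ((t, x), s)‖ₑ ^ 2 ∂σ ∂χ ≤ Cf)
    (hCg : ∀ t, ∫⁻ x, ∫⁻ s, ‖ψ ((t, x), s)‖ₑ ^ 2 ∂σ ∂χ ≤ Cg) :
    StronglyMeasurable (fun p : T × (X × X) =>
      ∫ s, φ ((p.1, p.2.1), s) * ψ ((p.1, p.2.2), s) ∂σ) ∧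
    ∫⁻ p, ‖∫ s, φ ((p.1, p.2.1), s) * ψ ((p.1, p.2.2), s) ∂σ‖ₑ ^ 2 ∂(τ.prod (χ.prod χ)) ≤
      (Cf * ∫⁻ z, ‖φ z‖ₑ ^ 2 ∂((τ.prod χ).prod σ)) ^ (1 / 2 : ℝ) *
      (Cg * ∫⁻ z, ‖ψ z‖ₑ ^ 2 ∂((τ.prod χ).prod σ)) ^ (1 / 2 : ℝ) := by
  have hφm := hφ.measurable
  have hψm := hψ.measurable
  constructor
  · apply StronglyMeasurable.integral_prod_right'
      (f := fun z : (T × (X × X)) × S => φ ((z.1.1, z.1.2.1), z.2) * ψ ((z.1.1, z.1.2.2), z.2))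
    exact (hφ.comp_measurable (by fun_prop)).mul (hψ.comp_measurable (by fun_prop))
  set A : T × X → ℝ≥0∞ := fun u => ∫⁻ s, ‖φ (u, s)‖ₑ ^ 2 ∂σ with hA
  set B : T × X → ℝ≥0∞ := fun u => ∫⁻ s, ‖ψ (u, s)‖ₑ ^ 2 ∂σ with hB
  have hAm : Measurable A := Measurable.lintegral_prod_right' (f := fun z => ‖φ z‖ₑ ^ 2) (by fun_prop)
  have hBm : Measurable B := Measurable.lintegral_prod_right' (f := fun z => ‖ψ z‖ₑ ^ 2) (by fun_prop)
  have hA1 : Measurable fun t => ∫⁻ x, A (t, x) ∂χ := hAm.lintegral_prod_right'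
  have hB1 : Measurable fun t => ∫⁻ x, B (t, x) ∂χ := hBm.lintegral_prod_right'
  have key : ∀ {φ : (T × X) × S → ℂ} {C : ℝ≥0∞}, StronglyMeasurable φ →
      Measurable (fun u : T × X => ∫⁻ s, ‖φ (u, s)‖ₑ ^ 2 ∂σ) →
      (∀ t, ∫⁻ x, ∫⁻ s, ‖φ ((t, x), s)‖ₑ ^ 2 ∂σ ∂χ ≤ C) →
      ∫⁻ t, (∫⁻ x, ∫⁻ s, ‖φ ((t, x), s)‖ₑ ^ 2 ∂σ ∂χ) ^ 2 ∂τ ≤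
        C * ∫⁻ z, ‖φ z‖ₑ ^ 2 ∂((τ.prod χ).prod σ) := by
    intro φ C hφ hm hC
    have hφm := hφ.measurable
    rw [lintegral_prod _ (by fun_prop), lintegral_prod _ (by fun_prop)]
    calc _ ≤ ∫⁻ t, C * (∫⁻ x, ∫⁻ s, ‖φ ((t, x), s)‖ₑ ^ 2 ∂σ ∂χ) ∂τ := by
          apply lintegral_mono
          intro t
          dsimp only
          rw [sq]
          gcongr
          exact hC t
      _ = _ := by
          rw [lintegral_const_mul]
          exact hm.lintegral_prod_right'
  calc _ ≤ ∫⁻ p : T × (X × X), A (p.1, p.2.1) * B (p.1, p.2.2) ∂(τ.prod (χ.prod χ)) := by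
        apply lintegral_mono
        intro p
        dsimp only
        have h1 : ‖∫ s, φ ((p.1, p.2.1), s) * ψ ((p.1, p.2.2), s) ∂σ‖ₑ ≤
            A (p.1, p.2.1) ^ (1 / 2 : ℝ) * B (p.1, p.2.2) ^ (1 / 2 : ℝ) := by
          refine (enorm_integral_le_lintegral_enorm _).trans ?_
          simp_rw [enorm_mul]
          exact cs_lintegral σ (by fun_prop) (by fun_prop)
        calc _ ≤ (A (p.1, p.2.1) ^ (1 / 2 : ℝ) * B (p.1, p.2.2) ^ (1 / 2 : ℝ)) ^ 2 := by gcongr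
          _ = _ := by
            rw [mul_pow, ← ENNReal.rpow_natCast, ← ENNReal.rpow_natCast, ← ENNReal.rpow_mul,
              ← ENNReal.rpow_mul]
            norm_num
    _ = ∫⁻ t, (∫⁻ x, A (t, x) ∂χ) * (∫⁻ x, B (t, x) ∂χ) ∂τ := by
        rw [lintegral_prod _ (by fun_prop)]
        apply lintegral_congr
        intro t
        exact lintegral_prod_mul (f := fun x => A (t, x)) (g := fun y => B (t, y))
          (by fun_prop) (by fun_prop)
    _ ≤ _ := cs_lintegral τ hA1.aemeasurable hB1.aemeasurable
    _ ≤ _ := by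
        gcongr
        · exact key hφ hAm hCf
        · exact key hψ hBm hCg

lemma piHalf_box_le {κ : Type} [Fintype κ] (a : κ → ℝ) (c : ℝ) :
    piHalf κ (Set.univ.pi fun i => Set.Icc (a i) (a i + c)) ≤
      ENNReal.ofReal c ^ Fintype.card κ := by
  unfold piHalf
  rw [Measure.pi_pi]
  calc _ ≤ ∏ _i : κ, ENNReal.ofReal c := by
        apply Finset.prod_le_prod'
        intro i _
        refine (Measure.restrict_apply_le _ _).trans ?_
        simp
    _ = _ := by simp

lemma slice_bound {ι κ τ ρ : Type} [Fintype ι] [Fintype κ] [Fintype τ] [Fintype ρ]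
    (e : (ι ⊕ κ) ⊕ τ ≃ ρ) (J : (((ι → ℝ) × (κ → ℝ)) × (τ → ℝ)) ≃ᵐ (ρ → ℝ))
    (hJ : ∀ u v w k, J ((u, v), w) (e k) = Sum.elim (Sum.elim u v) w k)
    (f : (ρ → ℝ) → ℂ) (M : ℝ) (hM : ∀ z, ‖f z‖ ≤ M) (a : ρ → ℝ) (c : ℝ)
    (hS : ∀ z, z ∉ (Set.univ.pi fun i => Set.Icc (a i) (a i + c)) → f z = 0) (t : ι → ℝ) :
    ∫⁻ x, ∫⁻ s, ‖f (J ((t, x), s))‖ₑ ^ 2 ∂(piHalf τ) ∂(piHalf κ) ≤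
      ENNReal.ofReal M ^ 2 * ENNReal.ofReal c ^ Fintype.card κ *
        ENNReal.ofReal c ^ Fintype.card τ := by
  set Bx : Set (κ → ℝ) := Set.univ.pi fun i =>
    Set.Icc (a (e (.inl (.inr i)))) (a (e (.inl (.inr i))) + c) with hBx
  set Bs : Set (τ → ℝ) := Set.univ.pi fun i =>
    Set.Icc (a (e (.inr i))) (a (e (.inr i)) + c) with hBs
  have hBxm : MeasurableSet Bx := MeasurableSet.univ_pi fun i => measurableSet_Icc
  have hBsm : MeasurableSet Bs := MeasurableSet.univ_pi fun i => measurableSet_Icc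
  have hpt : ∀ x s, ‖f (J ((t, x), s))‖ₑ ^ 2 ≤
      (Bx.indicator (fun _ => ENNReal.ofReal M ^ 2) x) * Bs.indicator (fun _ => 1) s := by
    intro x s
    by_cases hx : x ∈ Bx
    · by_cases hs : s ∈ Bs
      · simp only [hx, hs, Set.indicator_of_mem, mul_one]
        gcongr
        rw [← ofReal_norm]
        exact ENNReal.ofReal_le_ofReal (hM _)
      · have : f (J ((t, x), s)) = 0 := by
          apply hS
          intro h
          apply hs
          intro i _
          have := h (e (.inr i)) trivial
          rwa [hJ] at this
        simp [this]
    · have : f (J ((t, x), s)) = 0 := by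
        apply hS
        intro h
        apply hx
        intro i _
        have := h (e (.inl (.inr i))) trivial
        rwa [hJ] at this
      simp [this]
  calc _ ≤ ∫⁻ x, ∫⁻ s, (Bx.indicator (fun _ => ENNReal.ofReal M ^ 2) x) *
        Bs.indicator (fun _ => 1) s ∂(piHalf τ) ∂(piHalf κ) :=
        lintegral_mono fun x => lintegral_mono fun s => hpt x s
    _ = ENNReal.ofReal M ^ 2 * piHalf κ Bx * piHalf τ Bs := by
        rw [lintegral_lintegral_mul]
        · rw [lintegral_indicator hBxm, lintegral_indicator hBsm]; simp
        · exact (measurable_const.indicator hBxm).aemeasurable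
        · exact (measurable_const.indicator hBsm).aemeasurable
    _ ≤ _ := by
        gcongr
        · exact piHalf_box_le _ _
        · exact piHalf_box_le _ _

lemma L2norm_eq (n : ℕ) (f : (Fin n → ℝ) → ℂ) (hf : AEStronglyMeasurable f (μpos n)) :
    L2norm n f = Real.sqrt ((∫⁻ x, ‖f x‖ₑ ^ 2 ∂(μpos n)).toReal) := by
  unfold L2norm
  rw [integral_eq_lintegral_of_nonneg_ae (Eventually.of_forall fun x => by positivity)
    (by fun_prop)]
  congr 3
  funext x
  rw [ENNReal.ofReal_pow (norm_nonneg _), ofReal_norm]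

lemma memLp_two_iff_lint {α : Type*} [MeasurableSpace α] {μ : Measure α} {f : α → ℂ} :
    MemLp f 2 μ ↔ AEStronglyMeasurable f μ ∧ ∫⁻ x, ‖f x‖ₑ ^ 2 ∂μ < ∞ := by
  rw [MemLp]
  refine and_congr_right fun _ => ?_
  rw [eLpNorm_lt_top_iff_lintegral_rpow_enorm_lt_top (by norm_num) (by norm_num)]
  simp

lemma M_nonneg (q : ℕ) (f : (Fin q → ℝ) → ℂ) (M : ℝ) (h : ∀ᵐ t ∂(μpos q), ‖f t‖ ≤ M) :
    0 ≤ M := by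
  have hne : μpos q ≠ 0 := by
    intro h0
    have h1 : μpos q (Set.univ.pi fun _ => Set.Icc 0 1) = 0 := by rw [h0]; rfl
    have h2 : halfLine (Set.Icc 0 1) = 1 := by
      unfold halfLine
      rw [Measure.restrict_apply measurableSet_Icc, Set.inter_eq_left.2 Set.Icc_subset_Ici_self]
      simp
    rw [μpos_eq, piHalf, Measure.pi_pi] at h1
    simp [h2] at h1
  have : (ae (μpos q)).NeBot := ae_neBot.2 hne
  obtain ⟨t, ht⟩ := h.exists
  exact (norm_nonneg _).trans ht

lemma exists_good (q : ℕ) (f : (Fin q → ℝ) → ℂ) (hf : AEStronglyMeasurable f (μpos q)) (M : ℝ)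
    (hb : ∀ᵐ t ∂(μpos q), ‖f t‖ ≤ M) (S : Set (Fin q → ℝ)) (hSm : MeasurableSet S)
    (hs : ∀ᵐ t ∂(μpos q), t ∉ S → f t = 0) :
    ∃ f', StronglyMeasurable f' ∧ f =ᵐ[μpos q] f' ∧ (∀ z, ‖f' z‖ ≤ M) ∧ ∀ z, z ∉ S → f' z = 0 := by
  have hM := M_nonneg q f M hb
  obtain ⟨f1, hf1, hff⟩ := hf
  refine ⟨(S ∩ {z | ‖f1 z‖ ≤ M}).indicator f1, ?_, ?_, ?_, ?_⟩
  · exact hf1.indicator (hSm.inter (measurableSet_le hf1.norm.measurable measurable_const))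
  · filter_upwards [hff, hb, hs] with z h1 h2 h3
    by_cases hz : z ∈ S
    · have hm : z ∈ S ∩ {z | ‖f1 z‖ ≤ M} := ⟨hz, by simpa [← h1] using h2⟩
      rw [Set.indicator_of_mem hm, h1]
    · rw [Set.indicator_of_notMem (fun h => hz h.1), h3 hz]
  · intro z
    by_cases h : z ∈ S ∩ {z | ‖f1 z‖ ≤ M}
    · rw [Set.indicator_of_mem h]; exact h.2
    · rw [Set.indicator_of_notMem h]; simpa using hM
  · intro z hz
    exact Set.indicator_of_notMem (fun h => hz h.1) _

lemma final_real (q a b : ℕ) (hq : q = a + 1 + b) (M : ℝ) (hM : 0 ≤ M) (S : Set (Fin q → ℝ))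
    (a0 : Fin q → ℝ) (c : ℝ) (hS : S = Set.univ.pi fun i => Set.Icc (a0 i) (a0 i + c))
    (I : ℝ≥0∞) :
    ((ENNReal.ofReal M ^ 2 * ENNReal.ofReal c ^ a * ENNReal.ofReal c ^ b * I) ^
      (1 / 2 : ℝ)).toReal =
    M * (volume S).toReal ^ (((q : ℝ) - 1) / (2 * (q : ℝ))) * Real.sqrt I.toReal := by
  have hV : (volume S).toReal = ((ENNReal.ofReal c).toReal) ^ q := by
    rw [hS, volume_pi_pi]; simp
  have hc : 0 ≤ (ENNReal.ofReal c).toReal := ENNReal.toReal_nonneg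
  rw [hV]
  simp only [← ENNReal.toReal_rpow, ENNReal.toReal_mul, ENNReal.toReal_pow,
    ENNReal.toReal_ofReal hM]
  generalize (ENNReal.ofReal c).toReal = l at hc
  have hq0 : (q : ℝ) ≠ 0 := by
    have : q ≠ 0 := by omega
    exact_mod_cast this
  have h1 : (l ^ q) ^ (((q : ℝ) - 1) / (2 * (q : ℝ))) = Real.sqrt (l ^ (a + b)) := by
    rw [Real.sqrt_eq_rpow, ← Real.rpow_natCast, ← Real.rpow_natCast, ← Real.rpow_mul hc,
      ← Real.rpow_mul hc]
    congr 1
    field_simp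
    subst hq; push_cast; ring
  rw [h1, ← Real.sqrt_eq_rpow, Real.sqrt_mul (by positivity), mul_assoc, ← pow_add,
    Real.sqrt_mul (by positivity), Real.sqrt_sq hM]

lemma exists_ef (a b : ℕ) : ∃ e : (Fin 1 ⊕ Fin a) ⊕ Fin b ≃ Fin (a + 1 + b),
    (∀ i, (e (.inl (.inl i)) : ℕ) = a) ∧ (∀ i, (e (.inl (.inr i)) : ℕ) = i) ∧
    (∀ i, (e (.inr i) : ℕ) = a + b - i) := by
  let m : (Fin 1 ⊕ Fin a) ⊕ Fin b → Fin (a + 1 + b) :=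
    Sum.elim (Sum.elim (fun _ => ⟨a, by omega⟩) (fun i => ⟨i, by omega⟩))
      (fun i => ⟨a + b - i, by omega⟩)
  have hm : Function.Bijective m := by
    rw [Fintype.bijective_iff_injective_and_card]
    constructor
    · rintro ((i | i) | i) ((j | j) | j) h <;> simp [m, Fin.ext_iff] at h ⊢ <;> omega
    · simp; omega
  exact ⟨Equiv.ofBijective m hm, fun i => rfl, fun i => rfl, fun i => rfl⟩

lemma exists_eg (a b : ℕ) : ∃ e : (Fin 1 ⊕ Fin a) ⊕ Fin b ≃ Fin (a + 1 + b),
    (∀ i, (e (.inl (.inl i)) : ℕ) = b) ∧ (∀ i, (e (.inl (.inr i)) : ℕ) = b + 1 + i) ∧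
    (∀ i, (e (.inr i) : ℕ) = i) := by
  let m : (Fin 1 ⊕ Fin a) ⊕ Fin b → Fin (a + 1 + b) :=
    Sum.elim (Sum.elim (fun _ => ⟨b, by omega⟩) (fun i => ⟨b + 1 + i, by omega⟩))
      (fun i => ⟨i, by omega⟩)
  have hm : Function.Bijective m := by
    rw [Fintype.bijective_iff_injective_and_card]
    constructor
    · rintro ((i | i) | i) ((j | j) | j) h <;> simp [m, Fin.ext_iff] at h ⊢ <;> omega
    · simp; omega
  exact ⟨Equiv.ofBijective m hm, fun i => rfl, fun i => rfl, fun i => rfl⟩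

lemma exists_eh (a d : ℕ) (hd : d = 2 * a + 1) : ∃ e : Fin 1 ⊕ (Fin a ⊕ Fin a) ≃ Fin d,
    (∀ i, (e (.inl i) : ℕ) = a) ∧ (∀ i, (e (.inr (.inl i)) : ℕ) = i) ∧
    (∀ i, (e (.inr (.inr i)) : ℕ) = a + 1 + i) := by
  let m : Fin 1 ⊕ (Fin a ⊕ Fin a) → Fin d :=
    Sum.elim (fun _ => ⟨a, by omega⟩)
      (Sum.elim (fun i => ⟨i, by omega⟩) (fun i => ⟨a + 1 + i, by omega⟩))
  have hm : Function.Bijective m := by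
    rw [Fintype.bijective_iff_injective_and_card]
    constructor
    · rintro (i | (i | i)) (j | (j | j)) h <;> simp [m, Fin.ext_iff] at h ⊢ <;> omega
    · simp; omega
  exact ⟨Equiv.ofBijective m hm, fun i => rfl, fun i => rfl, fun i => rfl⟩

lemma pad_eq {k : ℕ} (t : Fin k → ℝ) (i : ℕ) (j : Fin k) (h : i = j) : pad t i = t j := by
  subst h; simp [pad]

lemma main_aux (a b : ℕ) (f g : (Fin (a + 1 + b) → ℝ) → ℂ)
    (hf : MemLp f 2 (μpos (a + 1 + b))) (hg : MemLp g 2 (μpos (a + 1 + b)))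
    (Mf Mg : ℝ)
    (hbf : ∀ᵐ t ∂(μpos (a + 1 + b)), ‖f t‖ ≤ Mf) (hbg : ∀ᵐ t ∂(μpos (a + 1 + b)), ‖g t‖ ≤ Mg)
    (Sf Sg : Set (Fin (a + 1 + b) → ℝ))
    (af : Fin (a + 1 + b) → ℝ) (cf : ℝ)
    (hSf : Sf = Set.univ.pi fun i => Set.Icc (af i) (af i + cf))
    (ag : Fin (a + 1 + b) → ℝ) (cg : ℝ)
    (hSg : Sg = Set.univ.pi fun i => Set.Icc (ag i) (ag i + cg))
    (hsf : ∀ᵐ t ∂(μpos (a + 1 + b)), t ∉ Sf → f t = 0)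
    (hsg : ∀ᵐ t ∂(μpos (a + 1 + b)), t ∉ Sg → g t = 0)
    (q r : ℕ) (hq : a + 1 + b = q) (hr : r = b + 1) (F : (Fin (q + q + 1 - 2 * r) → ℝ) → ℂ)
    (hF : ∀ t, F t = ∫ s in posOrthant b,
      f (fun j => if (j : ℕ) < a + 1 then pad t j else pad s (a + b - (j : ℕ))) *
      g (fun j => if (j : ℕ) < b then pad s j else pad t (a + (j : ℕ) - b))) :
    AEStronglyMeasurable F (μpos (q + q + 1 - 2 * r)) ∧
    ∫⁻ t, ‖F t‖ₑ ^ 2 ∂(μpos (q + q + 1 - 2 * r)) ≤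
      (ENNReal.ofReal Mf ^ 2 * ENNReal.ofReal cf ^ a * ENNReal.ofReal cf ^ b *
        ∫⁻ t, ‖f t‖ₑ ^ 2 ∂(μpos (a + 1 + b))) ^ (1 / 2 : ℝ) *
      (ENNReal.ofReal Mg ^ 2 * ENNReal.ofReal cg ^ a * ENNReal.ofReal cg ^ b *
        ∫⁻ t, ‖g t‖ₑ ^ 2 ∂(μpos (a + 1 + b))) ^ (1 / 2 : ℝ) := by
  have hSfm : MeasurableSet Sf := hSf ▸ MeasurableSet.univ_pi fun i => measurableSet_Icc
  have hSgm : MeasurableSet Sg := hSg ▸ MeasurableSet.univ_pi fun i => measurableSet_Icc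
  obtain ⟨f', hf'm, hff, hf'M, hf'S⟩ := exists_good _ f hf.1 Mf hbf Sf hSfm hsf
  obtain ⟨g', hg'm, hgg, hg'M, hg'S⟩ := exists_good _ g hg.1 Mg hbg Sg hSgm hsg
  obtain ⟨ef, ef1, ef2, ef3⟩ := exists_ef a b
  obtain ⟨eg, eg1, eg2, eg3⟩ := exists_eg a b
  obtain ⟨eh, eh1, eh2, eh3⟩ := exists_eh a (q + q + 1 - 2 * r) (by omega)
  obtain ⟨Jf, hJf, Jf'⟩ := exists_join_left ef
  obtain ⟨Jg, hJg, Jg'⟩ := exists_join_left eg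
  obtain ⟨Jh, hJh, Jh'⟩ := exists_join_right eh
  have hIf : ∫⁻ t, ‖f t‖ₑ ^ 2 ∂(μpos (a + 1 + b)) = ∫⁻ z, ‖f' (Jf z)‖ₑ ^ 2
      ∂(((piHalf (Fin 1)).prod (piHalf (Fin a))).prod (piHalf (Fin b))) := by
    rw [hJf.lintegral_comp_emb Jf.measurableEmbedding (fun z => ‖f' z‖ₑ ^ 2), ← μpos_eq]
    apply lintegral_congr_ae
    filter_upwards [hff] with z hz
    rw [hz]
  have hIg : ∫⁻ t, ‖g t‖ₑ ^ 2 ∂(μpos (a + 1 + b)) = ∫⁻ z, ‖g' (Jg z)‖ₑ ^ 2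
      ∂(((piHalf (Fin 1)).prod (piHalf (Fin a))).prod (piHalf (Fin b))) := by
    rw [hJg.lintegral_comp_emb Jg.measurableEmbedding (fun z => ‖g' z‖ₑ ^ 2), ← μpos_eq]
    apply lintegral_congr_ae
    filter_upwards [hgg] with z hz
    rw [hz]
  obtain ⟨hm, hle⟩ := abstract_bound_s9 (piHalf (Fin 1)) (piHalf (Fin a)) (piHalf (Fin b))
    (fun z => f' (Jf z)) (fun z => g' (Jg z)) (hf'm.comp_measurable Jf.measurable)
    (hg'm.comp_measurable Jg.measurable) _ _
    (slice_bound ef Jf Jf' f' Mf hf'M af cf (hSf ▸ hf'S))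
    (slice_bound eg Jg Jg' g' Mg hg'M ag cg (hSg ▸ hg'S))
  rw [hIf, hIg]
  -- a.e. identities of slices
  have aef : ∀ᵐ u ∂((piHalf (Fin 1)).prod (piHalf (Fin a))), ∀ᵐ s ∂(piHalf (Fin b)),
      f (Jf (u, s)) = f' (Jf (u, s)) := by
    apply Measure.ae_ae_of_ae_prod (p := fun z => f (Jf z) = f' (Jf z))
    rw [μpos_eq] at hff
    exact hJf.quasiMeasurePreserving.ae hff
  have aeg : ∀ᵐ u ∂((piHalf (Fin 1)).prod (piHalf (Fin a))), ∀ᵐ s ∂(piHalf (Fin b)),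
      g (Jg (u, s)) = g' (Jg (u, s)) := by
    apply Measure.ae_ae_of_ae_prod (p := fun z => g (Jg z) = g' (Jg z))
    rw [μpos_eq] at hgg
    exact hJg.quasiMeasurePreserving.ae hgg
  have q1 : Measure.QuasiMeasurePreserving
      (fun p : (Fin 1 → ℝ) × ((Fin a → ℝ) × (Fin a → ℝ)) => (p.1, p.2.1))
      ((piHalf (Fin 1)).prod ((piHalf (Fin a)).prod (piHalf (Fin a))))
      ((piHalf (Fin 1)).prod (piHalf (Fin a))) :=
    MeasureTheory.QuasiMeasurePreserving.prodMap (Measure.QuasiMeasurePreserving.id _) Measure.quasiMeasurePreserving_fst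
  have q2 : Measure.QuasiMeasurePreserving
      (fun p : (Fin 1 → ℝ) × ((Fin a → ℝ) × (Fin a → ℝ)) => (p.1, p.2.2))
      ((piHalf (Fin 1)).prod ((piHalf (Fin a)).prod (piHalf (Fin a))))
      ((piHalf (Fin 1)).prod (piHalf (Fin a))) :=
    MeasureTheory.QuasiMeasurePreserving.prodMap (Measure.QuasiMeasurePreserving.id _) Measure.quasiMeasurePreserving_snd
  have hFJ : ∀ p, F (Jh p) = ∫ s, f (Jf ((p.1, p.2.1), s)) * g (Jg ((p.1, p.2.2), s))
      ∂(piHalf (Fin b)) := by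
    rintro ⟨t, x, y⟩
    rw [hF, ← μpos_eq]
    unfold μpos
    congr 1
    funext s
    congr 2
    · funext j
      obtain ⟨k, rfl⟩ := ef.surjective j
      rw [Jf']
      rcases k with (k | k) | k
      · rw [ef1, if_pos (by omega), pad_eq _ _ (eh (.inl k)) (eh1 k).symm, Jh']
        rfl
      · rw [ef2, if_pos (by omega), pad_eq _ _ (eh (.inr (.inl k))) (eh2 k).symm, Jh']
        rfl
      · rw [ef3, if_neg (by omega), pad_eq _ _ k (by omega)]
        rfl
    · funext j
      obtain ⟨k, rfl⟩ := eg.surjective j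
      rw [Jg']
      rcases k with (k | k) | k
      · rw [eg1, if_neg (by omega), pad_eq _ _ (eh (.inl k)) (by rw [eh1 k]; omega), Jh']
        rfl
      · rw [eg2, if_neg (by omega), pad_eq _ _ (eh (.inr (.inr k))) (by rw [eh3 k]; omega), Jh']
        rfl
      · rw [eg3, if_pos (by omega), pad_eq _ _ k rfl]
        rfl
  have hae : (fun p => F (Jh p)) =ᵐ[(piHalf (Fin 1)).prod ((piHalf (Fin a)).prod (piHalf (Fin a)))]
      fun p => ∫ s, f' (Jf ((p.1, p.2.1), s)) * g' (Jg ((p.1, p.2.2), s)) ∂(piHalf (Fin b)) := by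
    filter_upwards [q1.ae aef, q2.ae aeg] with p h1 h2
    rw [hFJ]
    apply integral_congr_ae
    filter_upwards [h1, h2] with s h3 h4
    rw [h3, h4]
  constructor
  · rw [μpos_eq, ← hJh.aestronglyMeasurable_comp_iff Jh.measurableEmbedding]
    exact ⟨_, hm, hae⟩
  · rw [μpos_eq, ← hJh.lintegral_comp_emb Jh.measurableEmbedding]
    refine le_trans (le_of_eq ?_) (hle.trans (le_of_eq ?_))
    · apply lintegral_congr_ae
      filter_upwards [hae] with p hp
      rw [hp]
    · simp

/-- Cauchy–Schwarz type bound for star contractions of bounded,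
boundedly supported kernels. -/
theorem star_contraction_norm_bound (q : ℕ) (hq2 : 2 ≤ q)
    (f g : (Fin q → ℝ) → ℂ)
    (hf : MeasureTheory.MemLp f 2 (μpos q)) (hg : MeasureTheory.MemLp g 2 (μpos q))
    (Mf Mg : ℝ)
    (hbf : ∀ᵐ t ∂(μpos q), ‖f t‖ ≤ Mf) (hbg : ∀ᵐ t ∂(μpos q), ‖g t‖ ≤ Mg)
    (Sf Sg : Set (Fin q → ℝ))
    (hSf : IsCube q Sf) (hSf' : Sf ⊆ posOrthant q)
    (hSg : IsCube q Sg) (hSg' : Sg ⊆ posOrthant q)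
    (hsf : ∀ᵐ t ∂(μpos q), t ∉ Sf → f t = 0) (hsg : ∀ᵐ t ∂(μpos q), t ∉ Sg → g t = 0)
    (r : ℕ) (hr1 : 1 ≤ r) (hrq : r ≤ q) :
    MeasureTheory.MemLp (starC q q r f g) 2 (μpos (q + q + 1 - 2 * r)) ∧
    L2norm (q + q + 1 - 2 * r) (starC q q r f g) ≤
      Real.sqrt (Mf * Mg *
        ((MeasureTheory.volume Sf).toReal * (MeasureTheory.volume Sg).toReal)
          ^ (((q : ℝ) - 1) / (2 * (q : ℝ)))
        * L2norm q f * L2norm q g) := by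
  obtain ⟨a, b, rfl, rfl⟩ : ∃ a b, q = a + 1 + b ∧ r = b + 1 :=
    ⟨q - r, r - 1, by omega, by omega⟩
  obtain ⟨af, cf, hSf⟩ := hSf
  obtain ⟨ag, cg, hSg⟩ := hSg
  have hMf := M_nonneg _ f Mf hbf
  have hMg := M_nonneg _ g Mg hbg
  obtain ⟨hm, hle⟩ := main_aux a b f g hf hg Mf Mg hbf hbg Sf Sg af cf hSf ag cg hSg hsf hsg
    (a + 1 + b) (b + 1) rfl rfl (starC (a + 1 + b) (a + 1 + b) (b + 1) f g) (by
      intro t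
      unfold starC
      show ∫ s in posOrthant b, _ = _
      congr 1
      funext s
      unfold starKer
      congr 2
      · funext j
        congr 1
        · apply propext; constructor <;> intro h <;> omega
        · congr 1; omega
      · funext j
        congr 1
        congr 1
        omega)
  have hIf := (memLp_two_iff_lint.1 hf).2
  have hIg := (memLp_two_iff_lint.1 hg).2
  have hfin : ∀ (M c : ℝ) (I : ℝ≥0∞), I < ∞ →
      (ENNReal.ofReal M ^ 2 * ENNReal.ofReal c ^ a * ENNReal.ofReal c ^ b * I) ^ (1 / 2 : ℝ)
        < ∞ := by
    intro M c I hI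
    refine ENNReal.rpow_lt_top_of_nonneg (by norm_num) ?_
    exact ENNReal.mul_ne_top (by finiteness) hI.ne
  have hR := ENNReal.mul_lt_top (hfin Mf cf _ hIf) (hfin Mg cg _ hIg)
  refine ⟨memLp_two_iff_lint.2 ⟨hm, hle.trans_lt hR⟩, ?_⟩
  rw [L2norm_eq _ _ hm]
  apply Real.sqrt_le_sqrt
  refine (ENNReal.toReal_mono hR.ne hle).trans (le_of_eq ?_)
  rw [ENNReal.toReal_mul, final_real _ a b rfl Mf hMf Sf af cf hSf,
    final_real _ a b rfl Mg hMg Sg ag cg hSg, L2norm_eq _ _ hf.1, L2norm_eq _ _ hg.1,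
    Real.mul_rpow ENNReal.toReal_nonneg ENNReal.toReal_nonneg]
  ring

end
end
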